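/- arXiv:1805.04344 — 9 statements merged into one kernel-verified Lean document; each statement's English description precedes it below -/
import Mathlib

section
/- Suppose that for some constants C1, C2 > 0 and some r0 with 1 ≤ r0 < r_G one has sup_{x∈V} Σ_{y∈B^w(x,r0)} w_{x,y}^{-1} ≤ C1·r0^d and inf_{x∈V} μ(B^w(x,r0)) ≥ C2·r0^d. Then there exists a constant C3 > 0, depending only on C1, C2, c_M, d and α (in particular not on r0 or r_G), such that for every x ∈ V and every function f : V → ℝ, Σ_{z∈B(x,r0)} ( f(z) − (f)_{B^w(z,r0)} )² μ_z ≤ C3·r0^α · Σ_{z∈B(x,r0)} Σ_{y∈B(x,2r0)} ( f(z) − f(y) )² w_{z,y} ρ(z,y)^{−(d+α)} μ_z μ_y, where (f)_A := μ(A)^{−1} Σ_{z∈A} f(z) μ_z for a finite nonempty set A ⊆ V. -/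
open scoped ENNReal
open Classical

/-- Weighted Poincaré-type inequality (Lemma 2.1 of the paper).  On a countable
set `V` carrying a metric `ρ` (with `ρ ≥ 1` off the diagonal), point masses `μ`
comparable to `1`, symmetric nonnegative conductances `w`, and the `d`-set
condition with constants `cG, rG`, if for some `1 ≤ r0 < rG` one has
`sup_x ∑_{y ∈ B^w(x,r0)} w_{x,y}⁻¹ ≤ C1 r0^d` and
`inf_x μ(B^w(x,r0)) ≥ C2 r0^d`, then there is `C3 > 0` depending only on
`C1, C2, cM, d, α` such that for all `x` and `f`,
`∑_{z ∈ B(x,r0)} (f z − (f)_{B^w(z,r0)})² μ_z ≤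
   C3 r0^α ∑_{z ∈ B(x,r0)} ∑_{y ∈ B(x,2r0)} (f z − f y)² w_{z,y} ρ(z,y)^{−(d+α)} μ_z μ_y`. -/
theorem stmt_0
    (C1 C2 cM d α : ℝ)
    (hC1 : 0 < C1) (hC2 : 0 < C2) (hcM : 1 ≤ cM) (hd : 0 < d)
    (hα0 : 0 < α) (hα2 : α < 2) :
    ∃ C3 : ℝ, 0 < C3 ∧
      ∀ (V : Type) [Countable V] (ρ : V → V → ℝ)
        (_hρ_self : ∀ x : V, ρ x x = 0)
        (_hρ_symm : ∀ x y : V, ρ x y = ρ y x)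
        (_hρ_tri : ∀ x y z : V, ρ x z ≤ ρ x y + ρ y z)
        (_hρ_sep : ∀ x y : V, x ≠ y → 1 ≤ ρ x y)
        (μ : V → ℝ)
        (_hμ : ∀ x : V, cM⁻¹ ≤ μ x ∧ μ x ≤ cM)
        (w : V → V → ℝ)
        (_hw_nonneg : ∀ x y : V, 0 ≤ w x y)
        (_hw_symm : ∀ x y : V, w x y = w y x)
        (_hw_diag : ∀ x : V, w x x = 0)
        (cG : ℝ) (rG : ℝ≥0∞) (_hcG : 1 ≤ cG) (_hrG : 1 < rG)
        (_hdset : ∀ (x : V) (r : ℝ), 1 ≤ r → ENNReal.ofReal r < rG →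
          ENNReal.ofReal (cG⁻¹ * r ^ d)
              ≤ (∑' y : V, if ρ x y ≤ r then ENNReal.ofReal (μ y) else 0) ∧
            (∑' y : V, if ρ x y ≤ r then ENNReal.ofReal (μ y) else 0)
              ≤ ENNReal.ofReal (cG * r ^ d))
        (r0 : ℝ) (_hr0 : 1 ≤ r0) (_hr0G : ENNReal.ofReal r0 < rG)
        (_hinv : ∀ x : V,
          (∑' y : V, if ρ x y ≤ r0 ∧ 0 < w x y then ENNReal.ofReal ((w x y)⁻¹) else 0)
            ≤ ENNReal.ofReal (C1 * r0 ^ d))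
        (_hlow : ∀ x : V,
          ENNReal.ofReal (C2 * r0 ^ d)
            ≤ (∑' y : V, if ρ x y ≤ r0 ∧ 0 < w x y then ENNReal.ofReal (μ y) else 0)),
        ∀ (x : V) (f : V → ℝ),
        (∑' z : V, if ρ x z ≤ r0 then
            ENNReal.ofReal ((f z -
                (∑' u : V, if ρ z u ≤ r0 ∧ 0 < w z u then f u * μ u else 0) /
                  (∑' u : V, if ρ z u ≤ r0 ∧ 0 < w z u then μ u else 0)) ^ 2 * μ z)
          else 0)
        ≤ ENNReal.ofReal (C3 * r0 ^ α) *
          (∑' z : V, ∑' y : V, if ρ x z ≤ r0 ∧ ρ x y ≤ 2 * r0 then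
              ENNReal.ofReal ((f z - f y) ^ 2 * (w z y / ρ z y ^ (d + α)) * μ z * μ y)
            else 0) := by
  refine ⟨C1 * cM / C2 ^ 2, by positivity, ?_⟩
  intro V _ ρ hself hsymm htri hsep μ hμ w hw0 hws hwd cG rG hcG hrG hdset r0 hr0 hr0G hinv hlow x f
  have hcM0 : 0 < cM := by linarith
  have hr : 0 < r0 := by linarith
  have hμ0 : ∀ y, 0 < μ y := fun y => lt_of_lt_of_le (inv_pos.mpr hcM0) (hμ y).1
  have hρ0 : ∀ a b, 0 ≤ ρ a b := by
    intro a b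
    by_cases h : a = b
    · rw [h, hself]
    · linarith [hsep a b h]
  rw [← ENNReal.tsum_mul_left]
  refine ENNReal.tsum_le_tsum fun z => ?_
  by_cases hz : ρ x z ≤ r0
  swap
  · simp [hz]
  rw [if_pos hz]
  have hfin : {y | ρ z y ≤ r0 ∧ 0 < w z y}.Finite := by
    have h1 : (∑' y : V, if ρ z y ≤ r0 then ENNReal.ofReal (μ y) else 0) ≠ ⊤ :=
      ne_top_of_le_ne_top ENNReal.ofReal_ne_top (hdset z r0 hr0 hr0G).2
    have h2 := ENNReal.finite_const_le_of_tsum_ne_top h1 (ε := ENNReal.ofReal cM⁻¹)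
      (by simpa using hcM0)
    refine h2.subset fun y hy => ?_
    simp only [Set.mem_setOf_eq] at hy ⊢
    rw [if_pos hy.1]
    exact ENNReal.ofReal_le_ofReal (hμ y).1
  obtain ⟨S, hS⟩ : ∃ S : Finset V, ∀ y, y ∈ S ↔ (ρ z y ≤ r0 ∧ 0 < w z y) :=
    ⟨hfin.toFinset, by simp⟩
  have key : ∀ {M : Type} [AddCommMonoid M] [TopologicalSpace M] (g : V → M),
      (∑' u : V, if ρ z u ≤ r0 ∧ 0 < w z u then g u else 0) = ∑ u ∈ S, g u := by
    intro M _ _ g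
    rw [tsum_eq_sum (s := S)]
    · exact Finset.sum_congr rfl fun u hu => if_pos ((hS u).1 hu)
    · intro u hu
      exact if_neg fun h => hu ((hS u).2 h)
  have hinv' := hinv z
  have hlow' := hlow z
  rw [key, ← ENNReal.ofReal_sum_of_nonneg (fun i _ => inv_nonneg.mpr (hw0 z i)),
    ENNReal.ofReal_le_ofReal_iff (by positivity)] at hinv'
  rw [key, ← ENNReal.ofReal_sum_of_nonneg (fun i _ => (hμ0 i).le),
    ENNReal.ofReal_le_ofReal_iff (Finset.sum_nonneg fun i _ => (hμ0 i).le)] at hlow'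
  rw [key, key]
  set m := ∑ u ∈ S, μ u with hm
  have hm0 : 0 < m := lt_of_lt_of_le (by positivity) hlow'
  set g : V → ℝ := fun y => (f z - f y) ^ 2 * (w z y / ρ z y ^ (d + α)) * μ z * μ y with hg
  have hg0 : ∀ y, 0 ≤ g y := fun y => by
    have := hw0 z y
    have := hμ0 z
    have := hμ0 y
    have := Real.rpow_nonneg (hρ0 z y) (d + α)
    simp only [hg]; positivity
  have hsum : ENNReal.ofReal (∑ y ∈ S, g y) ≤
      ∑' y : V, if ρ x z ≤ r0 ∧ ρ x y ≤ 2 * r0 then ENNReal.ofReal (g y) else 0 := by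
    rw [ENNReal.ofReal_sum_of_nonneg (fun i _ => hg0 i)]
    refine le_trans (Finset.sum_le_sum fun y hy => ?_) (ENNReal.sum_le_tsum S)
    have h1 := ((hS y).1 hy).1
    rw [if_pos ⟨hz, by linarith [htri x z y]⟩]
  refine le_trans ?_ (mul_le_mul_right hsum _)
  rw [← ENNReal.ofReal_mul (by positivity)]
  apply ENNReal.ofReal_le_ofReal
  -- real inequality
  have hdiff : f z - (∑ u ∈ S, f u * μ u) / m = (∑ u ∈ S, (f z - f u) * μ u) / m := by
    have : ∑ u ∈ S, (f z - f u) * μ u = f z * m - ∑ u ∈ S, f u * μ u := by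
      rw [hm, Finset.mul_sum, ← Finset.sum_sub_distrib]
      exact Finset.sum_congr rfl fun u _ => by ring
    rw [this]; field_simp
  have hcs : (∑ u ∈ S, (f z - f u) * μ u) ^ 2 ≤
      (∑ u ∈ S, (f z - f u) ^ 2 * w z u * μ u ^ 2) * ∑ u ∈ S, (w z u)⁻¹ := by
    refine Finset.sum_sq_le_sum_mul_sum_of_sq_eq_mul S (fun u _ => ?_) (fun u _ => ?_)
      (fun u hu => ?_)
    · have := hw0 z u
      positivity
    · exact inv_nonneg.mpr (hw0 z u)
    · have := ((hS u).1 hu).2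
      field_simp
  have hterm : (∑ u ∈ S, (f z - f u) ^ 2 * w z u * μ u ^ 2) * μ z ≤
      cM * r0 ^ (d + α) * ∑ u ∈ S, g u := by
    rw [Finset.sum_mul, Finset.mul_sum]
    refine Finset.sum_le_sum fun u hu => ?_
    obtain ⟨h1, h2⟩ := (hS u).1 hu
    have hne : z ≠ u := by
      rintro rfl
      rw [hwd] at h2
      exact lt_irrefl _ h2
    have hρ1 : 0 < ρ z u := by linarith [hsep z u hne]
    have hP : 0 < ρ z u ^ (d + α) := Real.rpow_pos_of_pos hρ1 _
    have hle : ρ z u ^ (d + α) ≤ r0 ^ (d + α) :=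
      Real.rpow_le_rpow hρ1.le h1 (by linarith)
    have hwle : w z u ≤ r0 ^ (d + α) * (w z u / ρ z u ^ (d + α)) := by
      rw [mul_div_assoc', le_div_iff₀ hP, mul_comm]
      exact mul_le_mul_of_nonneg_right hle h2.le
    have hz0 := hμ0 z
    have hu0 := hμ0 u
    have hu1 := (hμ u).2
    calc (f z - f u) ^ 2 * w z u * μ u ^ 2 * μ z
        = (f z - f u) ^ 2 * μ u * μ z * (w z u * μ u) := by ring
      _ ≤ (f z - f u) ^ 2 * μ u * μ z * ((r0 ^ (d + α) * (w z u / ρ z u ^ (d + α))) * cM) := by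
          gcongr
      _ = cM * r0 ^ (d + α) * g u := by simp only [hg]; ring
  have hG : 0 ≤ ∑ u ∈ S, g u := Finset.sum_nonneg fun i _ => hg0 i
  have hR : 0 < r0 ^ d := by positivity
  have hA : 0 < r0 ^ α := by positivity
  rw [Real.rpow_add hr] at hterm
  rw [hdiff, div_pow, div_mul_eq_mul_div, div_le_iff₀ (by positivity)]
  have hm2 : (C2 * r0 ^ d) ^ 2 ≤ m ^ 2 := by gcongr
  have hz0 := hμ0 z
  calc (∑ u ∈ S, (f z - f u) * μ u) ^ 2 * μ z
      ≤ ((∑ u ∈ S, (f z - f u) ^ 2 * w z u * μ u ^ 2) * ∑ u ∈ S, (w z u)⁻¹) * μ z := by gcongr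
    _ = ((∑ u ∈ S, (f z - f u) ^ 2 * w z u * μ u ^ 2) * μ z) * ∑ u ∈ S, (w z u)⁻¹ := by ring
    _ ≤ (cM * (r0 ^ d * r0 ^ α) * ∑ u ∈ S, g u) * (C1 * r0 ^ d) := by
        refine mul_le_mul hterm hinv' (Finset.sum_nonneg fun i _ => inv_nonneg.mpr (hw0 z i)) ?_
        positivity
    _ = C1 * cM / C2 ^ 2 * r0 ^ α * (∑ u ∈ S, g u) * (C2 * r0 ^ d) ^ 2 := by
        field_simp
    _ ≤ C1 * cM / C2 ^ 2 * r0 ^ α * (∑ u ∈ S, g u) * m ^ 2 := by gcongr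
end

section
/- Assume d ≥ 1 and set c_* := 8·c_G^{2/d}. Fix a base point 0 ∈ V, θ ∈ (0,1), R0 ≥ 1, c0 > 1/2 and C1 > 0, and suppose that for every R with R0 < R < r_G/(2 c_*) the following hold: (a) μ(B_z^w(x, s)) ≥ c0·μ(B(x, s)) for all x, z ∈ B(0,6R) and all s with R^θ/2 ≤ s ≤ 2 c_* R; (b) sup_{x∈B(0,6R)} Σ_{y∈B^w(x, c_* r)} w_{x,y}^{-1} ≤ C1·r^d for all r with R^θ/2 ≤ r ≤ 2R. Then there exists C2 > 0, depending only on c0, C1, c_G, c_M, d and α (not on R0, R or r_G), such that for every R0 < R < r_G/(2 c_*) and every r with R^θ/2 ≤ r ≤ 2R: inf_{x∈B(0,6R)} Σ_{y∈V : ρ(x,y) > 3r} w_{x,y} ρ(x,y)^{−(d+α)} ≥ C2·r^{−α}. -/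
open scoped ENNReal
open Classical

/-- Lemma 2.3 of the paper.  With `d ≥ 1` and `c_* := 8 cG^{2/d}`: under the
lower-volume assumption (a) on `B_z^w(x,s)` and the summability assumption (b)
on `w⁻¹` over `B^w(x, c_* r)` for scales `R0 < R < rG/(2 c_*)`, there is
`C2 > 0` depending only on `c0, C1, cG, cM, d, α` such that for all such `R`,
all `R^θ/2 ≤ r ≤ 2R` and all `x ∈ B(0, 6R)`,
`∑_{y : ρ(x,y) > 3r} w_{x,y} ρ(x,y)^{−(d+α)} ≥ C2 r^{−α}`. -/
theorem stmt_1
    (c0 C1 cG cM d α : ℝ)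
    (hc0 : 1 / 2 < c0) (hC1 : 0 < C1) (hcG : 1 ≤ cG) (hcM : 1 ≤ cM)
    (hd : 1 ≤ d) (hα0 : 0 < α) (hα2 : α < 2) :
    ∃ C2 : ℝ, 0 < C2 ∧
      ∀ (V : Type) [Countable V] (ρ : V → V → ℝ)
        (_hρ_self : ∀ x : V, ρ x x = 0)
        (_hρ_symm : ∀ x y : V, ρ x y = ρ y x)
        (_hρ_tri : ∀ x y z : V, ρ x z ≤ ρ x y + ρ y z)
        (_hρ_sep : ∀ x y : V, x ≠ y → 1 ≤ ρ x y)
        (μ : V → ℝ)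
        (_hμ : ∀ x : V, cM⁻¹ ≤ μ x ∧ μ x ≤ cM)
        (w : V → V → ℝ)
        (_hw_nonneg : ∀ x y : V, 0 ≤ w x y)
        (_hw_symm : ∀ x y : V, w x y = w y x)
        (_hw_diag : ∀ x : V, w x x = 0)
        (rG : ℝ≥0∞) (_hrG : 1 < rG)
        (_hdset : ∀ (x : V) (r : ℝ), 1 ≤ r → ENNReal.ofReal r < rG →
          ENNReal.ofReal (cG⁻¹ * r ^ d)
              ≤ (∑' y : V, if ρ x y ≤ r then ENNReal.ofReal (μ y) else 0) ∧
            (∑' y : V, if ρ x y ≤ r then ENNReal.ofReal (μ y) else 0)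
              ≤ ENNReal.ofReal (cG * r ^ d))
        (z0 : V) (θ R0 : ℝ) (_hθ0 : 0 < θ) (_hθ1 : θ < 1) (_hR0 : 1 ≤ R0)
        (_ha : ∀ R : ℝ, R0 < R →
          ENNReal.ofReal R < rG / ENNReal.ofReal (2 * (8 * cG ^ (2 / d))) →
          ∀ x z : V, ρ z0 x ≤ 6 * R → ρ z0 z ≤ 6 * R →
          ∀ s : ℝ, R ^ θ / 2 ≤ s → s ≤ 2 * (8 * cG ^ (2 / d)) * R →
            ENNReal.ofReal c0 *
                (∑' u : V, if ρ x u ≤ s then ENNReal.ofReal (μ u) else 0)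
              ≤ (∑' u : V, if ρ x u ≤ s ∧ 0 < w u z then ENNReal.ofReal (μ u) else 0))
        (_hb : ∀ R : ℝ, R0 < R →
          ENNReal.ofReal R < rG / ENNReal.ofReal (2 * (8 * cG ^ (2 / d))) →
          ∀ r : ℝ, R ^ θ / 2 ≤ r → r ≤ 2 * R →
          ∀ x : V, ρ z0 x ≤ 6 * R →
            (∑' y : V, if ρ x y ≤ 8 * cG ^ (2 / d) * r ∧ 0 < w x y then
                ENNReal.ofReal ((w x y)⁻¹) else 0)
              ≤ ENNReal.ofReal (C1 * r ^ d)),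
        ∀ R : ℝ, R0 < R →
          ENNReal.ofReal R < rG / ENNReal.ofReal (2 * (8 * cG ^ (2 / d))) →
          ∀ r : ℝ, R ^ θ / 2 ≤ r → r ≤ 2 * R →
          ∀ x : V, ρ z0 x ≤ 6 * R →
            ENNReal.ofReal (C2 * r ^ (-α))
              ≤ (∑' y : V, if 3 * r < ρ x y then
                  ENNReal.ofReal (w x y / ρ x y ^ (d + α)) else 0) := by
  have hcG0 : 0 < cG := by linarith
  have hcM0 : 0 < cM := by linarith
  have hd0 : 0 < d := by linarith
  obtain ⟨K, hK⟩ : ∃ K : ℝ, K = 8 * cG ^ (2 / d) := ⟨_, rfl⟩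
  have hK8 : 8 ≤ K := by
    have : 1 ≤ cG ^ (2 / d) := Real.one_le_rpow hcG (by positivity)
    rw [hK]; linarith
  have hK0 : 0 < K := by linarith
  have hKd : K ^ d = 8 ^ d * cG ^ 2 := by
    rw [hK, Real.mul_rpow (by norm_num) (by positivity), ← Real.rpow_mul hcG0.le,
      div_mul_cancel₀ _ hd0.ne']
    norm_num
  simp only [← hK]
  refine ⟨(K ^ (d + α))⁻¹ * (cM ^ 2 * C1)⁻¹, by positivity, ?_⟩
  intro V _ ρ hself hsymm htri hsep μ hμ w hw0 hwsymm hwd rG hrG hdset z0 θ R0 hθ0 hθ1 hR0 ha hb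
    R hR hRG r hr1 hr2 x hx
  have hR1 : 1 < R := lt_of_le_of_lt hR0 hR
  have hRθ : 1 ≤ R ^ θ := Real.one_le_rpow hR1.le hθ0.le
  have hr : 1 / 2 ≤ r := by linarith
  have hr0 : 0 < r := by linarith
  have hKr8 : 8 * r ≤ K * r := by nlinarith
  have hKrR : K * r ≤ 2 * K * R := by nlinarith
  have hlt : ENNReal.ofReal (2 * K * R) < rG := by
    rw [ENNReal.lt_div_iff_mul_lt (by left; simp; positivity) (Or.inl ENNReal.ofReal_ne_top)] at hRG
    rw [← ENNReal.ofReal_mul (by linarith)] at hRG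
    rwa [mul_comm]
  have hKrG : ENNReal.ofReal (K * r) < rG :=
    lt_of_le_of_lt (ENNReal.ofReal_le_ofReal hKrR) hlt
  have h3rG : ENNReal.ofReal (3 * r) < rG :=
    lt_of_le_of_lt (ENNReal.ofReal_le_ofReal (by linarith)) hKrG
  have h1 := (hdset x (K * r) (by linarith) hKrG).1
  have h2 := (hdset x (3 * r) (by linarith) h3rG).2
  have h3 := ha R hR hRG x x hx hx (K * r) (by linarith) hKrR
  have h4 := hb R hR hRG r hr1 hr2 x hx
  have hrd : 0 < r ^ d := by positivity
  -- mass of the annulus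
  have hmass : ENNReal.ofReal (r ^ d) ≤
      ∑' y : V, if 3 * r < ρ x y ∧ ρ x y ≤ K * r ∧ 0 < w x y
        then ENNReal.ofReal (μ y) else 0 := by
    have hsplit : (∑' u : V, if ρ x u ≤ K * r ∧ 0 < w u x then ENNReal.ofReal (μ u) else 0) ≤
        (∑' y : V, if 3 * r < ρ x y ∧ ρ x y ≤ K * r ∧ 0 < w x y
          then ENNReal.ofReal (μ y) else 0) +
        (∑' y : V, if ρ x y ≤ 3 * r then ENNReal.ofReal (μ y) else 0) := by
      rw [← ENNReal.tsum_add]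
      refine ENNReal.tsum_le_tsum fun y => ?_
      rw [hwsymm y x]
      by_cases hy : ρ x y ≤ 3 * r
      · rw [if_pos hy]
        split_ifs <;> simp
      · rw [if_neg hy]
        have hy' := not_le.1 hy
        simp [hy']
    have hchain : ENNReal.ofReal (c0 * (cG⁻¹ * (K * r) ^ d)) ≤
        (∑' y : V, if 3 * r < ρ x y ∧ ρ x y ≤ K * r ∧ 0 < w x y
          then ENNReal.ofReal (μ y) else 0) + ENNReal.ofReal (cG * (3 * r) ^ d) := by
      rw [ENNReal.ofReal_mul (by linarith)]
      calc _ ≤ _ := mul_le_mul_right h1 _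
        _ ≤ _ := h3
        _ ≤ _ := hsplit
        _ ≤ _ := add_le_add_right h2 _
    have hsub := tsub_le_iff_right.2 hchain
    rw [← ENNReal.ofReal_sub _ (by positivity)] at hsub
    refine le_trans (ENNReal.ofReal_le_ofReal ?_) hsub
    rw [Real.mul_rpow hK0.le hr0.le, Real.mul_rpow (by norm_num) hr0.le, hKd]
    have e : c0 * (cG⁻¹ * (8 ^ d * cG ^ 2 * r ^ d)) - cG * (3 ^ d * r ^ d)
        = cG * (r ^ d * (c0 * 8 ^ d - 3 ^ d)) := by
      field_simp
    rw [e]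
    have h83 : (8 / 3 : ℝ) * 3 ^ d ≤ 8 ^ d := by
      have : (8 / 3 : ℝ) ≤ (8 / 3) ^ d := by
        simpa using Real.rpow_le_rpow_of_exponent_le (by norm_num : (1 : ℝ) ≤ 8 / 3) hd
      have e2 : (8 : ℝ) ^ d = (8 / 3) ^ d * 3 ^ d := by
        rw [← Real.mul_rpow (by norm_num) (by norm_num)]; norm_num
      rw [e2]
      exact mul_le_mul_of_nonneg_right this (by positivity)
    have h33 : (3 : ℝ) ≤ 3 ^ d := by
      simpa using Real.rpow_le_rpow_of_exponent_le (by norm_num : (1 : ℝ) ≤ 3) hd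
    have h5 : 1 ≤ c0 * 8 ^ d - 3 ^ d := by nlinarith
    have h6 : r ^ d ≤ r ^ d * (c0 * 8 ^ d - 3 ^ d) := le_mul_of_one_le_right hrd.le h5
    nlinarith
  -- AM-GM in place of Cauchy-Schwarz
  obtain ⟨t, ht⟩ : ∃ t : ℝ, t = (cM * C1)⁻¹ := ⟨_, rfl⟩
  have ht0 : 0 < t := by rw [ht]; positivity
  have hW : ENNReal.ofReal (r ^ d * (cM ^ 2 * C1)⁻¹) ≤
      ∑' y : V, if 3 * r < ρ x y ∧ ρ x y ≤ K * r ∧ 0 < w x y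
        then ENNReal.ofReal (w x y) else 0 := by
    have key : ENNReal.ofReal (2 * t / cM) *
        (∑' y : V, if 3 * r < ρ x y ∧ ρ x y ≤ K * r ∧ 0 < w x y
          then ENNReal.ofReal (μ y) else 0) ≤
        (∑' y : V, if 3 * r < ρ x y ∧ ρ x y ≤ K * r ∧ 0 < w x y
          then ENNReal.ofReal (w x y) else 0) +
        ENNReal.ofReal (t ^ 2) * (∑' y : V, if ρ x y ≤ K * r ∧ 0 < w x y then
                ENNReal.ofReal ((w x y)⁻¹) else 0) := by
      rw [← ENNReal.tsum_mul_left, ← ENNReal.tsum_mul_left, ← ENNReal.tsum_add]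
      refine ENNReal.tsum_le_tsum fun y => ?_
      by_cases hy : 3 * r < ρ x y ∧ ρ x y ≤ K * r ∧ 0 < w x y
      · rw [if_pos hy, if_pos hy, if_pos hy.2, ← ENNReal.ofReal_mul (by positivity),
          ← ENNReal.ofReal_mul (by positivity), ← ENNReal.ofReal_add (hw0 x y)
            (mul_nonneg (by positivity) (inv_nonneg.2 (hw0 x y)))]
        refine ENNReal.ofReal_le_ofReal ?_
        have hwp := hy.2.2
        have g1 : 2 * t / cM * μ y ≤ 2 * t := by
          rw [div_mul_eq_mul_div, div_le_iff₀ hcM0]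
          exact mul_le_mul_of_nonneg_left (hμ y).2 (by positivity)
        have g2 : 2 * t ≤ w x y + t ^ 2 * (w x y)⁻¹ := by
          have : w x y + t ^ 2 * (w x y)⁻¹ - 2 * t = (w x y - t) ^ 2 * (w x y)⁻¹ := by
            field_simp; ring
          have : 0 ≤ (w x y - t) ^ 2 * (w x y)⁻¹ := by positivity
          linarith
        linarith
      · rw [if_neg hy]; simp
    have hchain : ENNReal.ofReal (2 * t / cM * r ^ d) ≤
        (∑' y : V, if 3 * r < ρ x y ∧ ρ x y ≤ K * r ∧ 0 < w x y
          then ENNReal.ofReal (w x y) else 0) + ENNReal.ofReal (t ^ 2 * (C1 * r ^ d)) := by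
      rw [ENNReal.ofReal_mul (by positivity), ENNReal.ofReal_mul (by positivity)]
      calc _ ≤ _ := mul_le_mul_right hmass _
        _ ≤ _ := key
        _ ≤ _ := add_le_add_right (mul_le_mul_right h4 _) _
    have hsub := tsub_le_iff_right.2 hchain
    rw [← ENNReal.ofReal_sub _ (by positivity)] at hsub
    refine le_trans (ENNReal.ofReal_le_ofReal (le_of_eq ?_)) hsub
    rw [ht]; field_simp; ring
  have hKr0 : 0 < K * r := by positivity
  have hfin : ENNReal.ofReal (((K * r) ^ (d + α))⁻¹) *
      (∑' y : V, if 3 * r < ρ x y ∧ ρ x y ≤ K * r ∧ 0 < w x y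
        then ENNReal.ofReal (w x y) else 0) ≤
      (∑' y : V, if 3 * r < ρ x y then
                  ENNReal.ofReal (w x y / ρ x y ^ (d + α)) else 0) := by
    rw [← ENNReal.tsum_mul_left]
    refine ENNReal.tsum_le_tsum fun y => ?_
    by_cases hy : 3 * r < ρ x y ∧ ρ x y ≤ K * r ∧ 0 < w x y
    · rw [if_pos hy, if_pos hy.1, ← ENNReal.ofReal_mul (by positivity)]
      refine ENNReal.ofReal_le_ofReal ?_
      have hρ : 0 < ρ x y := by linarith [hy.1]
      rw [div_eq_mul_inv, mul_comm]
      refine mul_le_mul_of_nonneg_left ?_ (hw0 x y)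
      exact inv_anti₀ (by positivity) (Real.rpow_le_rpow hρ.le hy.2.1 (by positivity))
    · rw [if_neg hy]; simp
  refine le_trans ?_ (le_trans (mul_le_mul_right hW _) hfin)
  rw [← ENNReal.ofReal_mul (by positivity)]
  refine ENNReal.ofReal_le_ofReal (le_of_eq ?_)
  rw [Real.mul_rpow hK0.le hr0.le, Real.rpow_add hr0, Real.rpow_neg hr0.le]
  field_simp
end

section
/- There exists a constant C, depending only on c_G and d, such that for every x ∈ V, every a ∈ (0,2], every b ∈ ℝ and every function f : V → [0,∞) (with the convention 0·log 0 := 0), one has Σ_{y∈V} max(0, −f(y)·(log f(y) + a·ρ(x,y) + b)) μ_y ≤ C·e^{−b}·a^{−d}. Consequently, whenever the sum Σ_{y∈V} f(y)·(log f(y) + a·ρ(x,y) + b) μ_y is well defined in (−∞,+∞], it is bounded below by −C·e^{−b}·a^{−d}. -/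
open scoped ENNReal
open Classical

lemma aux_pt (t s : ℝ) (ht : 0 ≤ t) : max 0 (-(t * (Real.log t + s))) ≤ Real.exp (-s) := by
  refine max_le (Real.exp_pos _).le ?_
  rcases ht.eq_or_lt with h | h
  · subst h; simp; exact (Real.exp_pos _).le
  · have h1 : -(Real.log t + s) ≤ Real.exp (-(Real.log t + s)) := by
      have := Real.add_one_le_exp (-(Real.log t + s)); linarith
    have h2 : Real.exp (-(Real.log t + s)) = t⁻¹ * Real.exp (-s) := by
      rw [neg_add, Real.exp_add, Real.exp_neg (Real.log t), Real.exp_log h]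
    rw [h2] at h1
    have h3 := mul_le_mul_of_nonneg_left h1 h.le
    rw [← mul_assoc, mul_inv_cancel₀ h.ne', one_mul] at h3
    linarith

lemma aux_summ (N : ℕ) :
    Summable (fun k : ℕ => ((k : ℝ) + 1) ^ N * Real.exp (-((k : ℝ) + 1))) := by
  have h := Real.summable_pow_mul_exp_neg_nat_mul N (r := 1) one_pos
  have h2 := (summable_nat_add_iff 1).2 h
  refine h2.congr ?_
  intro k
  push_cast
  congr 2
  ring

lemma aux_exp (u a : ℝ) (hu : 0 ≤ u) (ha : 0 < a) :
    ∃ k : ℕ, u ≤ 2 * ((k : ℝ) + 1) / a ∧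
      Real.exp (-(a * u)) ≤ Real.exp 1 * Real.exp (-((k : ℝ) + 1)) := by
  have h0 : 0 ≤ a * u := by positivity
  refine ⟨⌊a * u⌋₊, ?_, ?_⟩
  · rw [le_div_iff₀ ha]
    have := Nat.lt_floor_add_one (a * u)
    nlinarith
  · rw [← Real.exp_add]
    apply Real.exp_le_exp.2
    have := Nat.floor_le h0
    linarith

/-- There is a constant `C`, depending only on `cG` and `d`, such that for
every `x`, every `a ∈ (0,2]`, every `b ∈ ℝ` and every nonnegative `f : V → ℝ`
(with `0 · log 0 = 0`, which holds automatically since `Real.log 0 = 0`),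
`∑_y max(0, −f(y)(log f(y) + a ρ(x,y) + b)) μ_y ≤ C e^{−b} a^{−d}`.
Consequently, whenever `∑_y f(y)(log f(y) + a ρ(x,y) + b) μ_y` is summable,
it is bounded below by `−C e^{−b} a^{−d}`. -/
theorem stmt_5
    (cG d : ℝ) (hcG : 1 ≤ cG) (hd : 0 < d) :
    ∃ C : ℝ, 0 < C ∧
      ∀ (V : Type) [Countable V] (ρ : V → V → ℝ)
        (_hρ_self : ∀ x : V, ρ x x = 0)
        (_hρ_symm : ∀ x y : V, ρ x y = ρ y x)
        (_hρ_tri : ∀ x y z : V, ρ x z ≤ ρ x y + ρ y z)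
        (_hρ_sep : ∀ x y : V, x ≠ y → 1 ≤ ρ x y)
        (μ : V → ℝ) (cM : ℝ) (_hcM : 1 ≤ cM)
        (_hμ : ∀ x : V, cM⁻¹ ≤ μ x ∧ μ x ≤ cM)
        (_hupper : ∀ (x : V) (r : ℝ), 1 ≤ r →
          (∑' y : V, if ρ x y ≤ r then ENNReal.ofReal (μ y) else 0)
            ≤ ENNReal.ofReal (cG * r ^ d)),
        ∀ (x : V) (a b : ℝ) (f : V → ℝ), 0 < a → a ≤ 2 → (∀ y, 0 ≤ f y) →
          ((∑' y : V,
              ENNReal.ofReal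
                (max 0 (-(f y * (Real.log (f y) + a * ρ x y + b))) * μ y))
            ≤ ENNReal.ofReal (C * Real.exp (-b) * a ^ (-d))) ∧
          (Summable (fun y : V => f y * (Real.log (f y) + a * ρ x y + b) * μ y) →
            -(C * Real.exp (-b) * a ^ (-d))
              ≤ ∑' y : V, f y * (Real.log (f y) + a * ρ x y + b) * μ y) := by
  set N := ⌈d⌉₊ with hN
  set S := ∑' k : ℕ, ((k : ℝ) + 1) ^ N * Real.exp (-((k : ℝ) + 1)) with hS
  have hSs := aux_summ N
  have hSpos : 0 < S := hSs.tsum_pos (fun k => by positivity) 0 (by positivity)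
  refine ⟨cG * 2 ^ d * Real.exp 1 * S, by positivity, ?_⟩
  intro V _ ρ hself _ _ hsep μ cM hcM hμ hupper x a b f ha ha2 hf
  have hμ0 : ∀ y, 0 ≤ μ y := fun y => le_trans (by positivity) (hμ y).1
  have hρ0 : ∀ y, 0 ≤ ρ x y := by
    intro y
    by_cases h : x = y
    · subst h; rw [hself]
    · linarith [hsep x y h]
  set K := cG * 2 ^ d * Real.exp 1 * S * Real.exp (-b) * a ^ (-d) with hK
  have hK0 : 0 ≤ K := by positivity
  set h : V → ℝ := fun y => max 0 (-(f y * (Real.log (f y) + a * ρ x y + b))) * μ y with hh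
  have hh0 : ∀ y, 0 ≤ h y := fun y => mul_nonneg (le_max_left _ _) (hμ0 y)
  let w : ℕ → ℝ := fun k => Real.exp (-b) * (Real.exp 1 * Real.exp (-((k : ℝ) + 1)))
  have hw0 : ∀ k, 0 ≤ w k := fun k => by positivity
  have main : (∑' y : V, ENNReal.ofReal (h y)) ≤ ENNReal.ofReal K := by
    calc (∑' y : V, ENNReal.ofReal (h y))
        ≤ ∑' y : V, ∑' k : ℕ, ENNReal.ofReal (w k) *
            (if ρ x y ≤ 2 * ((k : ℝ) + 1) / a then ENNReal.ofReal (μ y) else 0) := by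
          refine ENNReal.tsum_le_tsum fun y => ?_
          obtain ⟨k, hk1, hk2⟩ := aux_exp (ρ x y) a (hρ0 y) ha
          refine le_trans ?_ (ENNReal.le_tsum k)
          rw [if_pos hk1, ← ENNReal.ofReal_mul (hw0 k)]
          apply ENNReal.ofReal_le_ofReal
          refine mul_le_mul_of_nonneg_right ?_ (hμ0 y)
          have h1 := aux_pt (f y) (a * ρ x y + b) (hf y)
          rw [← add_assoc] at h1
          refine h1.trans ?_
          rw [neg_add, Real.exp_add, mul_comm]
          exact mul_le_mul_of_nonneg_left hk2 (Real.exp_pos _).le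
      _ = ∑' k : ℕ, ENNReal.ofReal (w k) * ∑' y : V,
            (if ρ x y ≤ 2 * ((k : ℝ) + 1) / a then ENNReal.ofReal (μ y) else 0) := by
          rw [ENNReal.tsum_comm]
          simp_rw [ENNReal.tsum_mul_left]
      _ ≤ ∑' k : ℕ, ENNReal.ofReal ((cG * 2 ^ d * Real.exp 1 * Real.exp (-b) * a ^ (-d)) *
            (((k : ℝ) + 1) ^ N * Real.exp (-((k : ℝ) + 1)))) := by
          refine ENNReal.tsum_le_tsum fun k => ?_
          have hk0 : (0 : ℝ) ≤ k := Nat.cast_nonneg k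
          have hr : 1 ≤ 2 * ((k : ℝ) + 1) / a := by
            rw [le_div_iff₀ ha]; linarith
          refine (mul_le_mul_right (hupper x _ hr) _).trans ?_
          rw [← ENNReal.ofReal_mul (hw0 k)]
          apply ENNReal.ofReal_le_ofReal
          have e : (2 * ((k : ℝ) + 1) / a) ^ d = 2 ^ d * ((k : ℝ) + 1) ^ d * a ^ (-d) := by
            rw [Real.div_rpow (by positivity) ha.le, Real.mul_rpow (by norm_num) (by positivity),
              Real.rpow_neg ha.le, div_eq_mul_inv]
          have e2 : ((k : ℝ) + 1) ^ d ≤ ((k : ℝ) + 1) ^ N := by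
            rw [← Real.rpow_natCast]
            exact Real.rpow_le_rpow_of_exponent_le (by linarith) (Nat.le_ceil d)
          rw [e]
          calc w k * (cG * (2 ^ d * ((k : ℝ) + 1) ^ d * a ^ (-d)))
              = (cG * 2 ^ d * Real.exp 1 * Real.exp (-b) * a ^ (-d)) *
                (((k : ℝ) + 1) ^ d * Real.exp (-((k : ℝ) + 1))) := by
                simp only [w]; ring
            _ ≤ _ := by gcongr
      _ = ENNReal.ofReal K := by
          rw [← ENNReal.ofReal_tsum_of_nonneg (fun k => by positivity) (hSs.mul_left _),
            tsum_mul_left]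
          congr 1
          rw [hK, hS]; ring
  refine ⟨main, fun hs => ?_⟩
  have hsum : Summable h := by
    have h1 := ENNReal.summable_toReal (ne_top_of_le_ne_top ENNReal.ofReal_ne_top main)
    refine h1.congr fun y => ?_
    exact ENNReal.toReal_ofReal (hh0 y)
  have hle : ∑' y, h y ≤ K := by
    rw [← ENNReal.ofReal_tsum_of_nonneg hh0 hsum] at main
    exact (ENNReal.ofReal_le_ofReal_iff hK0).1 main
  have h3 := hs.neg.tsum_le_tsum (fun y => ?_) hsum
  · rw [tsum_neg] at h3
    linarith
  · rw [← neg_mul]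
    exact mul_le_mul_of_nonneg_right (le_max_right _ _) (hμ0 y)
end

section
/- Let x ∈ V, r0 ≥ 1 and c > 0, and suppose that Σ_{y∈V : ρ(x,y) ≤ s} w_{x,y} ≤ c·s^d for every real s ≥ r0. Then there exists a constant C, depending only on c, d and α, such that for every r ≥ r0, Σ_{y∈V : ρ(x,y) > r} w_{x,y} · ρ(x,y)^{−(d+α)} ≤ C·r^{−α}. -/
open scoped ENNReal
open Classical

/-- Tail estimate: if `∑_{y : ρ(x,y) ≤ s} w_{x,y} ≤ c s^d` for all `s ≥ r0`,
then `∑_{y : ρ(x,y) > r} w_{x,y} ρ(x,y)^{−(d+α)} ≤ C r^{−α}` for all `r ≥ r0`,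
with `C` depending only on `c, d, α`. -/
theorem stmt_8
    (c d α : ℝ) (hc : 0 < c) (hd : 0 < d) (hα0 : 0 < α) (hα2 : α < 2) :
    ∃ C : ℝ, 0 < C ∧
      ∀ (V : Type) [Countable V] (ρ : V → V → ℝ)
        (_hρ_self : ∀ x : V, ρ x x = 0)
        (_hρ_symm : ∀ x y : V, ρ x y = ρ y x)
        (_hρ_tri : ∀ x y z : V, ρ x z ≤ ρ x y + ρ y z)
        (_hρ_sep : ∀ x y : V, x ≠ y → 1 ≤ ρ x y)
        (w : V → V → ℝ)
        (_hw_nonneg : ∀ x y : V, 0 ≤ w x y)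
        (_hw_symm : ∀ x y : V, w x y = w y x)
        (_hw_diag : ∀ x : V, w x x = 0)
        (x : V) (r0 : ℝ) (_hr0 : 1 ≤ r0)
        (_hball : ∀ s : ℝ, r0 ≤ s →
          (∑' y : V, if ρ x y ≤ s then ENNReal.ofReal (w x y) else 0)
            ≤ ENNReal.ofReal (c * s ^ d)),
        ∀ r : ℝ, r0 ≤ r →
          (∑' y : V, if r < ρ x y then ENNReal.ofReal (w x y / ρ x y ^ (d + α)) else 0)
            ≤ ENNReal.ofReal (C * r ^ (-α)) := by
  have hq0 : (0:ℝ) < 2 ^ (-α) := Real.rpow_pos_of_pos two_pos _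
  have hq1 : (2:ℝ) ^ (-α) < 1 := Real.rpow_lt_one_of_one_lt_of_neg one_lt_two (by linarith)
  have h1q : (0:ℝ) < 1 - 2 ^ (-α) := by linarith
  have h2d : (0:ℝ) < 2 ^ d := Real.rpow_pos_of_pos two_pos _
  refine ⟨c * 2 ^ d * (1 - 2 ^ (-α))⁻¹, by positivity, ?_⟩
  intro V _ ρ _ _ _ _ w hw _ _ x r0 hr0 hball r hr
  have hr1 : 0 < r := by linarith
  have key : ∀ y : V, (if r < ρ x y then ENNReal.ofReal (w x y / ρ x y ^ (d + α)) else 0)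
      ≤ ∑' k : ℕ, (if ρ x y ≤ 2 ^ (k + 1) * r then ENNReal.ofReal (w x y) else 0)
          * ENNReal.ofReal ((2 ^ k * r) ^ (-(d + α))) := by
    intro y
    split_ifs with h
    · obtain ⟨k, hk1, hk2⟩ := exists_nat_pow_near (x := ρ x y / r) (y := 2)
        (by rw [le_div_iff₀ hr1]; linarith) one_lt_two
      rw [le_div_iff₀ hr1] at hk1
      rw [div_lt_iff₀ hr1] at hk2
      refine le_trans ?_ (ENNReal.le_tsum k)
      rw [if_pos hk2.le, ← ENNReal.ofReal_mul (hw x y)]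
      apply ENNReal.ofReal_le_ofReal
      rw [div_eq_mul_inv, ← Real.rpow_neg (by linarith)]
      apply mul_le_mul_of_nonneg_left _ (hw x y)
      exact Real.rpow_le_rpow_of_nonpos (by positivity) hk1 (by linarith)
    · exact zero_le
  have hterm : ∀ k : ℕ, c * (2 ^ (k + 1) * r) ^ d * (2 ^ k * r) ^ (-(d + α))
      = c * 2 ^ d * r ^ (-α) * (2 ^ (-α)) ^ k := by
    intro k
    have hp : (0:ℝ) < 2 ^ k * r := by positivity
    have e1 : (2:ℝ) ^ (k + 1) * r = 2 * (2 ^ k * r) := by ring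
    have e2 : ((2:ℝ) ^ k * r) ^ d * (2 ^ k * r) ^ (-(d + α)) = (2 ^ (-α)) ^ k * r ^ (-α) := by
      rw [← Real.rpow_add hp, show d + -(d + α) = -α by ring,
        Real.mul_rpow (by positivity) hr1.le, Real.rpow_pow_comm two_pos.le]
    rw [e1, Real.mul_rpow two_pos.le hp.le]
    linear_combination c * 2 ^ d * e2
  have hgeo := (hasSum_geometric_of_lt_one hq0.le hq1).mul_left (c * 2 ^ d * r ^ (-α))
  calc _ ≤ ∑' y : V, ∑' k : ℕ, (if ρ x y ≤ 2 ^ (k + 1) * r then ENNReal.ofReal (w x y) else 0)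
          * ENNReal.ofReal ((2 ^ k * r) ^ (-(d + α))) := ENNReal.tsum_le_tsum key
    _ = ∑' k : ℕ, (∑' y : V, (if ρ x y ≤ 2 ^ (k + 1) * r then ENNReal.ofReal (w x y) else 0))
          * ENNReal.ofReal ((2 ^ k * r) ^ (-(d + α))) := by
        rw [ENNReal.tsum_comm]
        simp_rw [ENNReal.tsum_mul_right]
    _ ≤ ∑' k : ℕ, ENNReal.ofReal (c * 2 ^ d * r ^ (-α) * (2 ^ (-α)) ^ k) := by
        refine ENNReal.tsum_le_tsum fun k => ?_
        rw [← hterm, ENNReal.ofReal_mul (p := c * (2 ^ (k + 1) * r) ^ d) (by positivity)]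
        gcongr
        apply hball
        have : (1:ℝ) ≤ 2 ^ (k + 1) := one_le_pow₀ one_le_two
        nlinarith
    _ = ENNReal.ofReal (c * 2 ^ d * (1 - 2 ^ (-α))⁻¹ * r ^ (-α)) := by
        rw [← ENNReal.ofReal_tsum_of_nonneg (fun k => by positivity) hgeo.summable, hgeo.tsum_eq]
        congr 1
        ring
    _ ≤ _ := le_rfl
end

section
/- Let x ∈ V, r0 ≥ 2 and c_1 > 0, and suppose that (i) Σ_{y∈V : y ≠ x, ρ(x,y) ≤ r0} w_{x,y} · ρ(x,y)^{−(d+α−2)} ≤ c_1·r0^{2−α}, and (ii) Σ_{y∈V : ρ(x,y) ≤ s} w_{x,y} ≤ c_1·s^d for every real s ≥ r0/2. Then there exists a constant C, depending only on c_1, d and α, such that for every r ≥ r0, Σ_{y∈V : y ≠ x, ρ(x,y) ≤ r} w_{x,y} · ρ(x,y)^{−(d+α−2)} ≤ C·r^{2−α}. -/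
open scoped ENNReal
open Classical

/-- Local moment estimate: if (i) `∑_{0<ρ(x,y)≤r0} w_{x,y} ρ(x,y)^{−(d+α−2)} ≤
c₁ r0^{2−α}` and (ii) `∑_{ρ(x,y)≤s} w_{x,y} ≤ c₁ s^d` for every `s ≥ r0/2`,
then `∑_{0<ρ(x,y)≤r} w_{x,y} ρ(x,y)^{−(d+α−2)} ≤ C r^{2−α}` for every `r ≥ r0`,
with `C` depending only on `c₁, d, α`. -/
theorem stmt_9
    (c1 d α : ℝ) (hc1 : 0 < c1) (hd : 0 < d) (hα0 : 0 < α) (hα2 : α < 2) :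
    ∃ C : ℝ, 0 < C ∧
      ∀ (V : Type) [Countable V] (ρ : V → V → ℝ)
        (_hρ_self : ∀ x : V, ρ x x = 0)
        (_hρ_symm : ∀ x y : V, ρ x y = ρ y x)
        (_hρ_tri : ∀ x y z : V, ρ x z ≤ ρ x y + ρ y z)
        (_hρ_sep : ∀ x y : V, x ≠ y → 1 ≤ ρ x y)
        (w : V → V → ℝ)
        (_hw_nonneg : ∀ x y : V, 0 ≤ w x y)
        (_hw_symm : ∀ x y : V, w x y = w y x)
        (_hw_diag : ∀ x : V, w x x = 0)
        (x : V) (r0 : ℝ) (_hr0 : 2 ≤ r0)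
        (_hi : (∑' y : V, if y ≠ x ∧ ρ x y ≤ r0 then
              ENNReal.ofReal (w x y / ρ x y ^ (d + α - 2)) else 0)
            ≤ ENNReal.ofReal (c1 * r0 ^ (2 - α)))
        (_hii : ∀ s : ℝ, r0 / 2 ≤ s →
          (∑' y : V, if ρ x y ≤ s then ENNReal.ofReal (w x y) else 0)
            ≤ ENNReal.ofReal (c1 * s ^ d)),
        ∀ r : ℝ, r0 ≤ r →
          (∑' y : V, if y ≠ x ∧ ρ x y ≤ r then
              ENNReal.ofReal (w x y / ρ x y ^ (d + α - 2)) else 0)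
            ≤ ENNReal.ofReal (C * r ^ (2 - α)) := by
  set β := d + α - 2 with hβ
  set K : ℝ := 2 ^ |β| with hK
  have hKpos : 0 < K := by positivity
  set q : ℝ := (1 / 2 : ℝ) ^ (2 - α) with hq
  have hq1 : q < 1 := Real.rpow_lt_one (by norm_num) (by norm_num) (by linarith)
  have hq0 : 0 < q := by positivity
  have h1q : 0 < 1 - q := by linarith
  have hKq : K * c1 ≤ K * c1 / (1 - q) := by
    rw [le_div_iff₀ h1q]
    nlinarith [mul_pos hKpos hc1, mul_pos (mul_pos hKpos hc1) hq0]
  have hKq0 : 0 < K * c1 / (1 - q) := by positivity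
  refine ⟨c1 + K * c1 / (1 - q), by positivity, ?_⟩
  intro V _ ρ hself hsymm htri hsep w hw0 hws hwd x r0 hr0 hi hii
  set C := c1 + K * c1 / (1 - q) with hC
  have hCpos : 0 < C := by positivity
  have hCq : C * q + K * c1 ≤ C := by
    have : K * c1 / (1 - q) * (1 - q) = K * c1 := div_mul_cancel₀ _ h1q.ne'
    nlinarith
  have step : ∀ r r' : ℝ, r0 ≤ r → r / 2 ≤ r' →
      (∑' y : V, if y ≠ x ∧ ρ x y ≤ r then
              ENNReal.ofReal (w x y / ρ x y ^ β) else 0) ≤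
      (∑' y : V, if y ≠ x ∧ ρ x y ≤ r' then
              ENNReal.ofReal (w x y / ρ x y ^ β) else 0)
        + ENNReal.ofReal (K * c1 * r ^ (2 - α)) := by
    intro r r' hr hr'
    have hrpos : 0 < r := by linarith
    have e : ENNReal.ofReal (K * c1 * r ^ (2 - α))
        = ENNReal.ofReal (K / r ^ β) * ENNReal.ofReal (c1 * r ^ d) := by
      rw [← ENNReal.ofReal_mul (by positivity)]
      congr 1
      have : r ^ (2 - α) = r ^ d / r ^ β := by
        rw [← Real.rpow_sub hrpos]; congr 1; rw [hβ]; ring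
      rw [this]; ring
    rw [e]
    refine le_trans ?_ (add_le_add_right (mul_le_mul_right (hii r (by linarith)) _) _)
    rw [← ENNReal.tsum_mul_left, ← ENNReal.tsum_add]
    refine ENNReal.tsum_le_tsum fun y => ?_
    by_cases h : y ≠ x ∧ ρ x y ≤ r
    · by_cases h' : ρ x y ≤ r'
      · rw [if_pos h, if_pos ⟨h.1, h'⟩]
        exact le_self_add
      · have h'' : ¬ (y ≠ x ∧ ρ x y ≤ r') := fun g => h' g.2
        rw [if_pos h, if_neg h'', if_pos h.2, zero_add, ← ENNReal.ofReal_mul (by positivity)]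
        apply ENNReal.ofReal_le_ofReal
        have hp : 0 < ρ x y := by
          have := hsep x y (Ne.symm h.1); linarith
        push Not at h'
        have ht1 : 1 ≤ r / ρ x y := by rw [le_div_iff₀ hp]; linarith [h.2]
        have ht2 : r / ρ x y ≤ 2 := by rw [div_le_iff₀ hp]; linarith
        have hb : r ^ β / ρ x y ^ β ≤ K := by
          rw [← Real.div_rpow hrpos.le hp.le]
          calc (r / ρ x y) ^ β ≤ (r / ρ x y) ^ |β| :=
                Real.rpow_le_rpow_of_exponent_le ht1 (le_abs_self _)
            _ ≤ 2 ^ |β| := Real.rpow_le_rpow (by positivity) ht2 (abs_nonneg _)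
        have hrb : 0 < r ^ β := by positivity
        have hpb : 0 < ρ x y ^ β := by positivity
        have : 1 / ρ x y ^ β ≤ K / r ^ β := by
          rw [le_div_iff₀ hrb]
          calc _ = r ^ β / ρ x y ^ β := by ring
            _ ≤ K := hb
        calc w x y / ρ x y ^ β = 1 / ρ x y ^ β * w x y := by ring
          _ ≤ _ := mul_le_mul_of_nonneg_right this (hw0 x y)
    · rw [if_neg h]; exact zero_le
  have main : ∀ n : ℕ, ∀ r : ℝ, r0 ≤ r → r ≤ 2 ^ n * r0 →
      (∑' y : V, if y ≠ x ∧ ρ x y ≤ r then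
              ENNReal.ofReal (w x y / ρ x y ^ β) else 0)
            ≤ ENNReal.ofReal (C * r ^ (2 - α)) := by
    intro n
    induction n with
    | zero =>
      intro r h1 h2
      have : r = r0 := by simp at h2; linarith
      subst this
      refine hi.trans (ENNReal.ofReal_le_ofReal ?_)
      have : 0 < r ^ (2 - α) := Real.rpow_pos_of_pos (by linarith) _
      apply mul_le_mul_of_nonneg_right _ this.le
      linarith
    | succ n ih =>
      intro r h1 h2
      have hrpos : 0 < r := by linarith
      have hr0pos : 0 < r0 := by linarith
      have hp : 0 < r ^ (2 - α) := by positivity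
      rcases le_total (r / 2) r0 with h | h
      · refine (step r r0 h1 h).trans ?_
        refine (add_le_add_left hi _).trans ?_
        rw [← ENNReal.ofReal_add (by positivity) (by positivity)]
        apply ENNReal.ofReal_le_ofReal
        have : r0 ^ (2 - α) ≤ r ^ (2 - α) :=
          Real.rpow_le_rpow hr0pos.le h1 (by linarith)
        have h3 := mul_le_mul_of_nonneg_left this hc1.le
        have h4 := mul_le_mul_of_nonneg_right hKq hp.le
        rw [hC, add_mul]; linarith
      · refine (step r (r / 2) h1 le_rfl).trans ?_
        refine (add_le_add_left (ih (r / 2) h (by rw [pow_succ] at h2; linarith)) _).trans ?_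
        rw [← ENNReal.ofReal_add (by positivity) (by positivity)]
        apply ENNReal.ofReal_le_ofReal
        have : (r / 2) ^ (2 - α) = q * r ^ (2 - α) := by
          rw [hq, ← Real.mul_rpow (by norm_num) hrpos.le]; congr 1; ring
        rw [this]
        have h4 := mul_le_mul_of_nonneg_right hCq hp.le
        linarith
  intro r hr
  obtain ⟨n, hn⟩ := pow_unbounded_of_one_lt r (one_lt_two)
  refine main n r hr ?_
  have : (0 : ℝ) < 2 ^ n := by positivity
  nlinarith
end

section
/- Let (Ω, F, P) be a probability space and (w_{x,y})_{x,y∈V_1} a family of nonnegative random variables. Let J_1 : V_1 × V_1 → ℝ satisfy C_1 ≤ J_1(x,y) ≤ C_2 for constants 0 < C_1 ≤ C_2, let θ ∈ (0,1), and let ε_0 ∈ (0, C_1·c_V^{−1}/2). Assume that Σ_{R=1}^{∞} Σ_{x∈V_1 : ρ(0,x) ≤ 6R} Σ_{r=⌈R^θ/2⌉}^{∞} P( | Σ_{y∈V_1 : ρ(x,y) ≤ r} ( w_{x,y} − J_1(x,y) ) | > ε_0·r^d ) < ∞, where the inner sum is over integers r. Then there exist deterministic constants 0 < c_5 ≤ c_6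 < ∞, depending only on C_1, C_2, c_V, d and ε_0, such that for P-almost every ω ∈ Ω there is R_1(ω) ≥ 1 with: for every integer R > R_1(ω), every x ∈ V_1 with ρ(0,x) ≤ 6R, and every integer r ≥ R^θ/2, c_5·r^d ≤ Σ_{y∈V_1 : ρ(x,y) ≤ r} w_{x,y}(ω) ≤ c_6·r^d. -/
open scoped ENNReal
open Classical MeasureTheory

/-- Borel–Cantelli consequence (from the proof of Lemma 5.5): under the
summability of the probabilities `p₂(x,r,ε₀)` over `R ≥ 1`, `x ∈ B(0,6R)` and
integers `r ≥ R^θ/2`, almost surely there are deterministic constants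
`0 < c₅ ≤ c₆` (depending only on `C₁, C₂, c_V, d, ε₀`) and a random threshold
`R₁(ω)` such that `c₅ r^d ≤ ∑_{y : ρ(x,y) ≤ r} w_{x,y}(ω) ≤ c₆ r^d` for every
integer `R > R₁(ω)`, every `x ∈ B(0,6R)` and every integer `r ≥ R^θ/2`. -/
theorem stmt_13
    (C1 C2 cV d θ ε0 : ℝ)
    (hC1 : 0 < C1) (hC12 : C1 ≤ C2) (hcV : 1 ≤ cV) (hd : 0 < d)
    (hθ0 : 0 < θ) (hθ1 : θ < 1) (hε0 : 0 < ε0) (hε0' : ε0 < C1 * cV⁻¹ / 2) :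
    ∃ c5 c6 : ℝ, 0 < c5 ∧ c5 ≤ c6 ∧
      ∀ (V1 : Type) [Countable V1] (ρ : V1 → V1 → ℝ)
        (_hρ_self : ∀ x : V1, ρ x x = 0)
        (_hρ_symm : ∀ x y : V1, ρ x y = ρ y x)
        (_hρ_tri : ∀ x y z : V1, ρ x z ≤ ρ x y + ρ y z)
        (_hρ_sep : ∀ x y : V1, x ≠ y → 1 ≤ ρ x y)
        (z0 : V1)
        (_hball : ∀ (x : V1) (s : ℝ), 1 ≤ s →
          {y : V1 | ρ x y ≤ s}.Finite ∧
            cV⁻¹ * s ^ d ≤ ({y : V1 | ρ x y ≤ s}.ncard : ℝ) ∧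
            ({y : V1 | ρ x y ≤ s}.ncard : ℝ) ≤ cV * s ^ d)
        (Ω : Type) [MeasurableSpace Ω] (P : Measure Ω) [IsProbabilityMeasure P]
        (w : V1 → V1 → Ω → ℝ)
        (_hw_nonneg : ∀ x y ω, 0 ≤ w x y ω)
        (_hw_meas : ∀ x y, Measurable (w x y))
        (J1 : V1 → V1 → ℝ)
        (_hJ : ∀ x y, C1 ≤ J1 x y ∧ J1 x y ≤ C2)
        (_hsum : (∑' (R : ℕ) (x : V1) (r : ℕ),
            if 1 ≤ R ∧ ρ z0 x ≤ 6 * (R : ℝ) ∧ (R : ℝ) ^ θ / 2 ≤ (r : ℝ) then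
              P {ω | ε0 * (r : ℝ) ^ d <
                  |∑ᶠ y ∈ {y : V1 | ρ x y ≤ (r : ℝ)}, (w x y ω - J1 x y)|}
            else 0) ≠ ⊤),
        ∀ᵐ ω ∂P, ∃ R1 : ℝ, 1 ≤ R1 ∧
          ∀ R : ℕ, R1 < (R : ℝ) → ∀ x : V1, ρ z0 x ≤ 6 * (R : ℝ) →
            ∀ r : ℕ, (R : ℝ) ^ θ / 2 ≤ (r : ℝ) →
              c5 * (r : ℝ) ^ d ≤ (∑ᶠ y ∈ {y : V1 | ρ x y ≤ (r : ℝ)}, w x y ω) ∧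
                (∑ᶠ y ∈ {y : V1 | ρ x y ≤ (r : ℝ)}, w x y ω) ≤ c6 * (r : ℝ) ^ d := by
  have hcV0 : 0 < cV := by linarith
  have hinv : cV⁻¹ ≤ 1 := inv_le_one_of_one_le₀ hcV
  have hinv0 : 0 < cV⁻¹ := inv_pos.mpr hcV0
  have hp : 0 < C1 * cV⁻¹ := mul_pos hC1 hinv0
  refine ⟨C1 * cV⁻¹ - ε0, C2 * cV + ε0, by linarith, ?_, ?_⟩
  · have h1 : C1 * cV⁻¹ ≤ C1 := mul_le_of_le_one_right hC1.le hinv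
    have h2 : C2 ≤ C2 * cV := le_mul_of_one_le_right (by linarith) hcV
    linarith
  intro V1 _ ρ _ _ _ _ z0 hball Ω _ P _ w _ _ J1 hJ hsum
  set E : ℕ → Set Ω := fun R => ⋃ x : V1, ⋃ r : ℕ,
    {ω | (1 ≤ R ∧ ρ z0 x ≤ 6 * (R : ℝ) ∧ (R : ℝ) ^ θ / 2 ≤ (r : ℝ)) ∧ ε0 * (r : ℝ) ^ d <
                  |∑ᶠ y ∈ {y : V1 | ρ x y ≤ (r : ℝ)}, (w x y ω - J1 x y)|} with hE
  have hEsum : ∑' R, P (E R) ≠ ⊤ := by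
    refine ne_top_of_le_ne_top hsum (ENNReal.tsum_le_tsum fun R => ?_)
    refine (measure_iUnion_le _).trans (ENNReal.tsum_le_tsum fun x => ?_)
    refine (measure_iUnion_le _).trans (ENNReal.tsum_le_tsum fun r => ?_)
    split_ifs with h
    · exact measure_mono fun ω hω => hω.2
    · simp only [h, false_and, Set.ofPred_false, measure_empty, le_refl]
  filter_upwards [ae_eventually_notMem hEsum] with ω hω
  obtain ⟨N, hN⟩ := Filter.eventually_atTop.1 hω
  refine ⟨max 1 (N : ℝ), le_max_left _ _, ?_⟩
  intro R hR x hx r hr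
  have hR1 : (1 : ℝ) < R := (le_max_left _ _).trans_lt hR
  have hRN : N ≤ R := by
    have : (N : ℝ) < R := (le_max_right _ _).trans_lt hR
    exact_mod_cast this.le
  have hr0 : (0 : ℝ) < r := by
    have : 0 < (R : ℝ) ^ θ := Real.rpow_pos_of_pos (by linarith) _
    linarith
  have hr1 : (1 : ℝ) ≤ r := by
    have : 0 < r := by exact_mod_cast hr0
    exact_mod_cast this
  have hgood : |∑ᶠ y ∈ {y : V1 | ρ x y ≤ (r : ℝ)}, (w x y ω - J1 x y)| ≤ ε0 * (r : ℝ) ^ d := by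
    by_contra hcon
    refine hN R hRN ?_
    simp only [hE, Set.mem_iUnion]
    exact ⟨x, r, ⟨by exact_mod_cast hR1.le, hx, hr⟩, not_le.1 hcon⟩
  obtain ⟨hfin, hlo, hhi⟩ := hball x r hr1
  rw [Set.ncard_eq_toFinset_card _ hfin] at hlo hhi
  rw [finsum_mem_eq_finite_toFinset_sum _ hfin, Finset.sum_sub_distrib, abs_le] at hgood
  have hw : ∑ᶠ y ∈ {y : V1 | ρ x y ≤ (r : ℝ)}, w x y ω = ∑ y ∈ hfin.toFinset, w x y ω :=
    finsum_mem_eq_finite_toFinset_sum _ hfin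
  simp only [Set.mem_setOf_eq] at hw ⊢
  rw [hw]
  have hJ1 := Finset.card_nsmul_le_sum hfin.toFinset (J1 x) C1 (fun y _ => (hJ x y).1)
  have hJ2 := Finset.sum_le_card_nsmul hfin.toFinset (J1 x) C2 (fun y _ => (hJ x y).2)
  rw [nsmul_eq_mul] at hJ1 hJ2
  have a1 := mul_le_mul_of_nonneg_left hlo hC1.le
  have a2 := mul_le_mul_of_nonneg_left hhi (hC1.le.trans hC12)
  constructor <;> nlinarith [hgood.1, hgood.2]
end

section
/- Let (Ω, F, P) be a probability space and (w_{x,y})_{x,y∈V_1} a family of nonnegative random variables. Let J_1 : V_1 × V_1 → ℝ satisfy C_1 ≤ J_1(x,y) ≤ C_2 for constants 0 < C_1 ≤ C_2, and let ε_0 ∈ (0, C_1·c_V^{−2}/2). Assume that Σ_{R=1}^{∞} Σ_{r=1}^{R} P( | Σ_{x,y∈V_1 : ρ(0,x) ≤ R, ρ(x,y) ≤ r} ( w_{x,y} − J_1(x,y) ) | > ε_0·r^d·R^d ) < ∞, where R and r range over positive integers. Then there exist deterministic constants 0 < c_1 ≤ c_2 < ∞, depending only on C_1, C_2, c_V, d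 and ε_0, such that for P-almost every ω ∈ Ω there is R_0(ω) ≥ 1 with: for every integer R > R_0(ω) and every integer 1 ≤ r ≤ R, c_1·r^d·R^d ≤ Σ_{x,y∈V_1 : ρ(0,x) ≤ R, ρ(x,y) ≤ r} w_{x,y}(ω) ≤ c_2·r^d·R^d. -/
open scoped ENNReal
open Classical MeasureTheory

lemma aux_finsum {V : Type} (ρ : V → V → ℝ) (z0 : V) (a b : ℝ)
    (hf : ∀ (x : V) (s : ℝ), 1 ≤ s → {y : V | ρ x y ≤ s}.Finite) (ha : 1 ≤ a) (hb : 1 ≤ b)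
    (f : V × V → ℝ) :
    (∑ᶠ p ∈ {p : V × V | ρ z0 p.1 ≤ a ∧ ρ p.1 p.2 ≤ b}, f p) =
      ∑ x ∈ (hf z0 a ha).toFinset, ∑ y ∈ (hf x b hb).toFinset, f (x, y) := by
  have h : {p : V × V | ρ z0 p.1 ≤ a ∧ ρ p.1 p.2 ≤ b} =
      ↑(((hf z0 a ha).toFinset.sigma (fun x => (hf x b hb).toFinset)).map
        (Equiv.sigmaEquivProd V V).toEmbedding) := by
    ext ⟨x, y⟩
    simp [Equiv.sigmaEquivProd]
  rw [h, finsum_mem_coe_finset, Finset.sum_map, Finset.sum_sigma]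
  rfl

/-- Borel–Cantelli consequence (from the proof of Lemma 5.4): under the
summability of the probabilities `p₁(r,R,ε₀)` over integers `1 ≤ r ≤ R`,
there are deterministic constants `0 < c₁ ≤ c₂` (depending only on
`C₁, C₂, c_V, d, ε₀`) such that almost surely, for some random threshold
`R₀(ω)` and all integers `R > R₀(ω)` and `1 ≤ r ≤ R`,
`c₁ r^d R^d ≤ ∑_{x,y : ρ(0,x) ≤ R, ρ(x,y) ≤ r} w_{x,y}(ω) ≤ c₂ r^d R^d`. -/
theorem stmt_14
    (C1 C2 cV d ε0 : ℝ)
    (hC1 : 0 < C1) (hC12 : C1 ≤ C2) (hcV : 1 ≤ cV) (hd : 0 < d)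
    (hε0 : 0 < ε0) (hε0' : ε0 < C1 * (cV⁻¹) ^ 2 / 2) :
    ∃ c1 c2 : ℝ, 0 < c1 ∧ c1 ≤ c2 ∧
      ∀ (V1 : Type) [Countable V1] (ρ : V1 → V1 → ℝ)
        (_hρ_self : ∀ x : V1, ρ x x = 0)
        (_hρ_symm : ∀ x y : V1, ρ x y = ρ y x)
        (_hρ_tri : ∀ x y z : V1, ρ x z ≤ ρ x y + ρ y z)
        (_hρ_sep : ∀ x y : V1, x ≠ y → 1 ≤ ρ x y)
        (z0 : V1)
        (_hball : ∀ (x : V1) (s : ℝ), 1 ≤ s →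
          {y : V1 | ρ x y ≤ s}.Finite ∧
            cV⁻¹ * s ^ d ≤ ({y : V1 | ρ x y ≤ s}.ncard : ℝ) ∧
            ({y : V1 | ρ x y ≤ s}.ncard : ℝ) ≤ cV * s ^ d)
        (Ω : Type) [MeasurableSpace Ω] (P : Measure Ω) [IsProbabilityMeasure P]
        (w : V1 → V1 → Ω → ℝ)
        (_hw_nonneg : ∀ x y ω, 0 ≤ w x y ω)
        (_hw_meas : ∀ x y, Measurable (w x y))
        (J1 : V1 → V1 → ℝ)
        (_hJ : ∀ x y, C1 ≤ J1 x y ∧ J1 x y ≤ C2)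
        (_hsum : (∑' (R : ℕ) (r : ℕ),
            if 1 ≤ r ∧ r ≤ R then
              P {ω | ε0 * (r : ℝ) ^ d * (R : ℝ) ^ d <
                  |∑ᶠ p ∈ {p : V1 × V1 |
                      ρ z0 p.1 ≤ (R : ℝ) ∧ ρ p.1 p.2 ≤ (r : ℝ)},
                    (w p.1 p.2 ω - J1 p.1 p.2)|}
            else 0) ≠ ⊤),
        ∀ᵐ ω ∂P, ∃ R0 : ℝ, 1 ≤ R0 ∧
          ∀ R : ℕ, R0 < (R : ℝ) → ∀ r : ℕ, 1 ≤ r → r ≤ R →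
            c1 * (r : ℝ) ^ d * (R : ℝ) ^ d ≤
                (∑ᶠ p ∈ {p : V1 × V1 |
                    ρ z0 p.1 ≤ (R : ℝ) ∧ ρ p.1 p.2 ≤ (r : ℝ)}, w p.1 p.2 ω) ∧
              (∑ᶠ p ∈ {p : V1 × V1 |
                  ρ z0 p.1 ≤ (R : ℝ) ∧ ρ p.1 p.2 ≤ (r : ℝ)}, w p.1 p.2 ω) ≤
                c2 * (r : ℝ) ^ d * (R : ℝ) ^ d := by
  have hcV0 : 0 < cV⁻¹ := by positivity
  have hk : 0 < C1 * (cV⁻¹) ^ 2 / 2 := by positivity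
  have hcV1 : cV⁻¹ ≤ 1 := inv_le_one_of_one_le₀ hcV
  refine ⟨C1 * (cV⁻¹) ^ 2 / 2, C2 * cV ^ 2 + ε0, hk, ?_, ?_⟩
  · have h1 : (cV⁻¹) ^ 2 ≤ 1 := pow_le_one₀ hcV0.le hcV1
    have h2 : 1 ≤ cV ^ 2 := one_le_pow₀ hcV
    nlinarith
  intro V1 _ ρ _ _ _ _ z0 hball Ω _ P _ w _ _ J1 hJ hsum
  have hf : ∀ (x : V1) (s : ℝ), 1 ≤ s → {y : V1 | ρ x y ≤ s}.Finite :=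
    fun x s hs => (hball x s hs).1
  have hcard : ∀ (x : V1) (s : ℝ) (hs : 1 ≤ s),
      cV⁻¹ * s ^ d ≤ ((hf x s hs).toFinset.card : ℝ) ∧
        ((hf x s hs).toFinset.card : ℝ) ≤ cV * s ^ d := by
    intro x s hs
    rw [← Set.ncard_eq_toFinset_card _ (hf x s hs)]
    exact (hball x s hs).2
  let E : ℕ → ℕ → Set Ω := fun R r => {ω | (1 ≤ r ∧ r ≤ R) ∧ ε0 * (r : ℝ) ^ d * (R : ℝ) ^ d <
                  |∑ᶠ p ∈ {p : V1 × V1 |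
                      ρ z0 p.1 ≤ (R : ℝ) ∧ ρ p.1 p.2 ≤ (r : ℝ)},
                    (w p.1 p.2 ω - J1 p.1 p.2)|}
  have hE : ∑' R, P (⋃ r, E R r) ≠ ⊤ := by
    refine ne_top_of_le_ne_top hsum (ENNReal.tsum_le_tsum fun R => ?_)
    refine (measure_iUnion_le _).trans (ENNReal.tsum_le_tsum fun r => ?_)
    split_ifs with h
    · exact measure_mono fun ω hω => hω.2
    · have : E R r = ∅ := by
        ext ω
        simp only [E, Set.mem_ofPred_eq, Set.mem_empty_iff_false, iff_false]
        exact fun h' => h h'.1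
      rw [this]; simp
  refine (ae_eventually_notMem hE).mono fun ω hω => ?_
  obtain ⟨N, hN⟩ := Filter.eventually_atTop.1 hω
  refine ⟨max 1 N, le_max_left _ _, ?_⟩
  intro R hR r hr hrR
  have hNR : N ≤ R := by exact_mod_cast ((le_max_right (1 : ℝ) N).trans hR.le)
  have h1 := hN R hNR
  have hr' : (1 : ℝ) ≤ r := by exact_mod_cast hr
  have hR' : (1 : ℝ) ≤ R := by exact_mod_cast hr.trans hrR
  have h2 : |∑ᶠ p ∈ {p : V1 × V1 | ρ z0 p.1 ≤ (R : ℝ) ∧ ρ p.1 p.2 ≤ (r : ℝ)},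
      (w p.1 p.2 ω - J1 p.1 p.2)| ≤ ε0 * (r : ℝ) ^ d * (R : ℝ) ^ d := by
    by_contra hc
    exact h1 (Set.mem_iUnion.2 ⟨r, ⟨hr, hrR⟩, not_le.1 hc⟩)
  rw [aux_finsum ρ z0 R r hf hR' hr'] at h2 ⊢
  simp only [Finset.sum_sub_distrib] at h2
  have hrd : 0 < (r : ℝ) ^ d := Real.rpow_pos_of_pos (by linarith) _
  have hRd : 0 < (R : ℝ) ^ d := Real.rpow_pos_of_pos (by linarith) _
  have hC2 : 0 < C2 := hC1.trans_le hC12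
  have hin : ∀ x, C1 * (cV⁻¹ * (r : ℝ) ^ d) ≤ ∑ y ∈ (hf x r hr').toFinset, J1 x y ∧
      ∑ y ∈ (hf x r hr').toFinset, J1 x y ≤ C2 * (cV * (r : ℝ) ^ d) := by
    intro x
    constructor
    · have := Finset.card_nsmul_le_sum (hf x r hr').toFinset (J1 x) C1 fun y _ => (hJ x y).1
      rw [nsmul_eq_mul, mul_comm] at this
      exact (mul_le_mul_of_nonneg_left (hcard x r hr').1 hC1.le).trans this
    · have := Finset.sum_le_card_nsmul (hf x r hr').toFinset (J1 x) C2 fun y _ => (hJ x y).2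
      rw [nsmul_eq_mul, mul_comm] at this
      exact this.trans (mul_le_mul_of_nonneg_left (hcard x r hr').2 hC2.le)
  have hlow := Finset.card_nsmul_le_sum (hf z0 R hR').toFinset _ _ fun x _ => (hin x).1
  have hup := Finset.sum_le_card_nsmul (hf z0 R hR').toFinset _ _ fun x _ => (hin x).2
  rw [nsmul_eq_mul] at hlow hup
  have hlow' := (mul_le_mul_of_nonneg_right (hcard z0 R hR').1
    (show 0 ≤ C1 * (cV⁻¹ * (r : ℝ) ^ d) by positivity)).trans hlow
  have hup' := hup.trans (mul_le_mul_of_nonneg_right (hcard z0 R hR').2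
    (show 0 ≤ C2 * (cV * (r : ℝ) ^ d) by positivity))
  have h3 := abs_le.1 h2
  have h4 : ε0 * ((r : ℝ) ^ d * (R : ℝ) ^ d) ≤
      C1 * (cV⁻¹) ^ 2 / 2 * ((r : ℝ) ^ d * (R : ℝ) ^ d) :=
    mul_le_mul_of_nonneg_right hε0'.le (by positivity)
  constructor
  · linarith [h3.1]
  · linarith [h3.2]
end

section
/- Let t ≥ 0, T > 0, x ∈ V, and let r be a real number with r ≥ 2 and 2r < r_G. Let A ⊆ (t, t+T) × B(x, r/2) be a Borel measurable subset of ℝ × V (V carrying the discrete topology) with ν(A) ≥ (1/2)·ν( (t,t+T) × B(x, r/2) ), where ν is the product of Lebesgue measure on ℝ and μ on V, and write A_s := { u ∈ V : (s,u) ∈ A }. Assume: (i) Σ_{u∈B^w(z,2r)} w_{z,u}^{−1} ≤ C_1·r^d for every z ∈ B(x,r); and (ii) μ( B_z^w(x, r/2) ) ≥ c_0·μ( B(x, r/2) ) for every z ∈ B(x,r), where c_0 > 1/2. Then there is a constant c > 0, depending only on C_1, c_0, c_M, c_G and d, such that for every z ∈ B(x,r): ∫_t^{t+T} Σ_{u∈A_s}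 w_{z,u} ds ≥ c·T·r^d. -/
open scoped ENNReal
open Classical MeasureTheory

/-- Krylov-type estimate from the proof of Proposition 3.4: if
`A ⊆ (t,t+T) × B(x,r/2)` occupies at least half of the space-time cylinder
(for the measure `ν = Leb × μ`), and the weights satisfy the inverse-sum bound
(i) and the non-degeneracy bound (ii), then for every `z ∈ B(x,r)`,
`∫_t^{t+T} ∑_{u ∈ A_s} w_{z,u} ds ≥ c T r^d` with `c` depending only on
`C₁, c₀, c_M, c_G, d`. -/
theorem stmt_15
    (C1 c0 cM cG d : ℝ)
    (hC1 : 0 < C1) (hc0 : 1 / 2 < c0) (hcM : 1 ≤ cM) (hcG : 1 ≤ cG) (hd : 0 < d) :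
    ∃ c : ℝ, 0 < c ∧
      ∀ (V : Type) [Countable V] (ρ : V → V → ℝ)
        (_hρ_self : ∀ x : V, ρ x x = 0)
        (_hρ_symm : ∀ x y : V, ρ x y = ρ y x)
        (_hρ_tri : ∀ x y z : V, ρ x z ≤ ρ x y + ρ y z)
        (_hρ_sep : ∀ x y : V, x ≠ y → 1 ≤ ρ x y)
        (μ : V → ℝ)
        (_hμ : ∀ x : V, cM⁻¹ ≤ μ x ∧ μ x ≤ cM)
        (w : V → V → ℝ)
        (_hw_nonneg : ∀ x y : V, 0 ≤ w x y)
        (_hw_symm : ∀ x y : V, w x y = w y x)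
        (_hw_diag : ∀ x : V, w x x = 0)
        (rG : ℝ≥0∞) (_hrG : 1 < rG)
        (_hdset : ∀ (x : V) (r : ℝ), 1 ≤ r → ENNReal.ofReal r < rG →
          ENNReal.ofReal (cG⁻¹ * r ^ d)
              ≤ (∑' y : V, if ρ x y ≤ r then ENNReal.ofReal (μ y) else 0) ∧
            (∑' y : V, if ρ x y ≤ r then ENNReal.ofReal (μ y) else 0)
              ≤ ENNReal.ofReal (cG * r ^ d))
        (t T : ℝ) (_ht : 0 ≤ t) (_hT : 0 < T)
        (x : V) (r : ℝ) (_hr : 2 ≤ r) (_hrrG : ENNReal.ofReal (2 * r) < rG)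
        (A : Set (ℝ × V))
        (_hAmeas : ∀ u : V, MeasurableSet {s : ℝ | (s, u) ∈ A})
        (_hAsub : A ⊆ (Set.Ioo t (t + T)) ×ˢ {u : V | ρ x u ≤ r / 2})
        (_hAbig :
          2⁻¹ * (∑' u : V,
              if ρ x u ≤ r / 2 then ENNReal.ofReal (μ u) * ENNReal.ofReal T else 0)
            ≤ (∑' u : V, ENNReal.ofReal (μ u) * volume {s : ℝ | (s, u) ∈ A}))
        (_hi : ∀ z : V, ρ x z ≤ r →
          (∑' u : V, if ρ z u ≤ 2 * r ∧ 0 < w z u then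
              ENNReal.ofReal ((w z u)⁻¹) else 0)
            ≤ ENNReal.ofReal (C1 * r ^ d))
        (_hii : ∀ z : V, ρ x z ≤ r →
          ENNReal.ofReal c0 *
              (∑' u : V, if ρ x u ≤ r / 2 then ENNReal.ofReal (μ u) else 0)
            ≤ (∑' u : V, if ρ x u ≤ r / 2 ∧ 0 < w u z then
                ENNReal.ofReal (μ u) else 0)),
        ∀ z : V, ρ x z ≤ r →
          ENNReal.ofReal (c * T * r ^ d)
            ≤ ∫⁻ s in Set.Ioo t (t + T),
                ∑' u : V, if (s, u) ∈ A then ENNReal.ofReal (w z u) else 0 := by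
  set κ : ℝ := cM⁻¹ * (c0 - 1/2) * (cG⁻¹ * (1/2) ^ d) with hκ
  have hcM0 : 0 < cM := by linarith
  have hcG0 : 0 < cG := by linarith
  have hκ0 : 0 < κ := by
    have : 0 < c0 - 1/2 := by linarith
    positivity
  refine ⟨κ ^ 2 / (4 * C1), by positivity, ?_⟩
  intro V _ ρ hρs hρsymm hρtri hρsep μ hμ w hw hwsymm hwd rG hrG hdset t T ht hT x r hr hrrG A
    hAm hAsub hAbig hi hii z hz
  have hzi := hi z hz
  have hzii := hii z hz
  have hr0 : 0 < r := by linarith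
  have hrd : 0 < r ^ d := by positivity
  have hball := hdset x (r/2) (by linarith)
    (lt_of_le_of_lt (ENNReal.ofReal_le_ofReal (by linarith)) hrrG)
  have hrd2 : (r / 2) ^ d = (1/2) ^ d * r ^ d := by
    rw [← Real.mul_rpow (by norm_num) hr0.le]; congr 1; ring
  rw [hrd2] at hball
  set L : V → ℝ≥0∞ := fun u => volume {s : ℝ | (s, u) ∈ A} with hL
  have hLT : ∀ u, L u ≤ ENNReal.ofReal T := by
    intro u
    calc L u ≤ volume (Set.Ioo t (t+T)) := measure_mono (fun s hs => (hAsub hs).1)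
      _ = ENNReal.ofReal T := by rw [Real.volume_Ioo]; congr 1; ring
  have hL0 : ∀ u, ¬ ρ x u ≤ r / 2 → L u = 0 := by
    intro u hu
    have : {s : ℝ | (s, u) ∈ A} = ∅ := by
      ext s; simp only [Set.mem_ofPred_eq, Set.mem_empty_iff_false, iff_false]
      exact fun h => hu (hAsub h).2
    simp [hL, this]
  have hI : (∫⁻ s in Set.Ioo t (t + T),
      ∑' u : V, if (s, u) ∈ A then ENNReal.ofReal (w z u) else 0)
      = ∑' u, ENNReal.ofReal (w z u) * L u := by
    rw [lintegral_tsum]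
    · congr 1; ext u
      have h1 : (fun s : ℝ => if (s, u) ∈ A then ENNReal.ofReal (w z u) else 0)
          = Set.indicator {s : ℝ | (s, u) ∈ A} (fun _ => ENNReal.ofReal (w z u)) := by
        ext s; simp [Set.indicator]
      have h3 : {s : ℝ | (s, u) ∈ A} ∩ Set.Ioo t (t + T) = {s : ℝ | (s, u) ∈ A} :=
        Set.inter_eq_left.mpr (fun s hs => (hAsub hs).1)
      rw [h1, lintegral_indicator_const (hAm u), Measure.restrict_apply (hAm u),
        h3]
    · intro u
      exact (Measurable.ite (hAm u) measurable_const measurable_const).aemeasurable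
  rw [hI]
  set I := ∑' u, ENNReal.ofReal (w z u) * L u with hIdef
  set m := ∑' u : V, if ρ x u ≤ r / 2 then ENNReal.ofReal (μ u) else 0 with hm
  set p := ∑' u : V, if ρ x u ≤ r / 2 ∧ 0 < w u z then ENNReal.ofReal (μ u) else 0 with hp
  set q := ∑' u : V, if ρ x u ≤ r / 2 ∧ ¬ 0 < w u z then ENNReal.ofReal (μ u) else 0 with hq
  set Y := ∑' u : V, if ρ x u ≤ r / 2 ∧ 0 < w u z then L u else 0 with hY
  have hpq : p + q = m := by
    rw [hp, hq, hm, ← ENNReal.tsum_add]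
    congr 1; ext u
    by_cases h1 : ρ x u ≤ r/2 <;> by_cases h2 : 0 < w u z <;> simp [h1, h2]
  have hmT : (∑' u : V, if ρ x u ≤ r / 2 then ENNReal.ofReal (μ u) * ENNReal.ofReal T else 0)
      = m * ENNReal.ofReal T := by
    rw [hm, ← ENNReal.tsum_mul_right]
    congr 1; ext u; split_ifs <;> simp
  rw [hmT] at hAbig
  have hXle : (∑' u : V, ENNReal.ofReal (μ u) * L u)
      ≤ ENNReal.ofReal cM * Y + q * ENNReal.ofReal T := by
    rw [hY, hq, ← ENNReal.tsum_mul_right, ← ENNReal.tsum_mul_left, ← ENNReal.tsum_add]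
    refine ENNReal.tsum_le_tsum fun u => ?_
    by_cases h1 : ρ x u ≤ r/2
    · by_cases h2 : 0 < w u z
      · simp only [h1, h2, and_self, if_true, not_true, and_false, if_false, zero_mul, add_zero]
        gcongr
        exact (hμ u).2
      · simp only [h1, h2, and_false, if_false, not_false_iff, and_self, if_true, mul_zero,
          zero_add]
        gcongr
        exact hLT u
    · simp [hL0 u h1]
  have hYle : Y ≤ ENNReal.ofReal (2 * C1 / κ) * I
      + ENNReal.ofReal (κ / (2 * C1)) * (ENNReal.ofReal (C1 * r ^ d) * ENNReal.ofReal T) := by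
    refine le_trans ?_ (add_le_add_right (mul_le_mul_right (mul_le_mul_left hzi _) _) _)
    rw [hY, hIdef, ← ENNReal.tsum_mul_right, ← ENNReal.tsum_mul_left, ← ENNReal.tsum_mul_left,
      ← ENNReal.tsum_add]
    refine ENNReal.tsum_le_tsum fun u => ?_
    by_cases h : ρ x u ≤ r/2 ∧ 0 < w u z
    · have hwz : 0 < w z u := by rw [hwsymm]; exact h.2
      have h2 : ρ z u ≤ 2 * r ∧ 0 < w z u :=
        ⟨by have := hρtri z x u; rw [hρsymm z x] at this; linarith [h.1], hwz⟩
      rw [if_pos h, if_pos h2]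
      calc L u = ENNReal.ofReal 1 * L u := by simp
        _ ≤ ENNReal.ofReal (2 * C1 / κ * w z u + κ / (2 * C1) * (w z u)⁻¹) * L u := by
          gcongr
          set a := 2 * C1 / κ * w z u with ha
          have ha0 : 0 < a := by positivity
          have : κ / (2 * C1) * (w z u)⁻¹ = a⁻¹ := by rw [ha]; field_simp
          rw [this]
          rcases le_total 1 a with h1 | h1
          · have := inv_pos.mpr ha0; linarith
          · have := (one_le_inv₀ ha0).mpr h1; linarith
        _ = ENNReal.ofReal (2 * C1 / κ) * (ENNReal.ofReal (w z u) * L u)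
            + ENNReal.ofReal (κ / (2 * C1)) * (ENNReal.ofReal ((w z u)⁻¹) * L u) := by
          rw [ENNReal.ofReal_add (by positivity) (by positivity),
            ENNReal.ofReal_mul (by positivity), ENNReal.ofReal_mul (by positivity)]
          ring
        _ ≤ _ := by
          gcongr
          exact hLT u
    · rw [if_neg h]; exact zero_le
  have hmfin : m ≠ ⊤ := ne_top_of_le_ne_top ENNReal.ofReal_ne_top hball.2
  have hpfin : p ≠ ⊤ := ne_top_of_le_ne_top hmfin (hpq ▸ le_self_add)
  have hqfin : q ≠ ⊤ := ne_top_of_le_ne_top hmfin (hpq ▸ le_add_self)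
  by_cases hItop : I = ⊤
  · rw [hItop]; exact le_top
  have hYfin : Y ≠ ⊤ := by
    refine ne_top_of_le_ne_top ?_ hYle
    finiteness
  have hA2 := hAbig.trans hXle
  have e1 := ENNReal.toReal_mono (by finiteness) hA2
  have e2 := ENNReal.toReal_mono (by finiteness) hYle
  have e3 := ENNReal.toReal_mono (by finiteness) hzii
  have e4 := ENNReal.toReal_mono (by finiteness) hball.1
  have e5 := congrArg ENNReal.toReal hpq
  rw [ENNReal.toReal_add (by finiteness) (by finiteness)] at e1 e2 e5
  simp only [ENNReal.toReal_mul, ENNReal.toReal_inv, ENNReal.toReal_ofNat] at e1 e2 e3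
  rw [ENNReal.toReal_ofReal (by positivity)] at e4
  rw [ENNReal.toReal_ofReal hT.le, ENNReal.toReal_ofReal hcM0.le] at e1
  rw [ENNReal.toReal_ofReal hT.le, ENNReal.toReal_ofReal (by positivity),
    ENNReal.toReal_ofReal (by positivity), ENNReal.toReal_ofReal (by positivity)] at e2
  rw [ENNReal.toReal_ofReal (by linarith)] at e3
  rw [ENNReal.ofReal_le_iff_le_toReal hItop]
  generalize I.toReal = I' at *
  generalize Y.toReal = Y' at *
  generalize m.toReal = m' at *
  generalize p.toReal = p' at *
  generalize q.toReal = q' at *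
  have f1 : (c0 - 1/2) * m' * T ≤ cM * Y' := by
    have : q' * T ≤ (m' - c0 * m') * T := mul_le_mul_of_nonneg_right (by linarith) hT.le
    nlinarith
  have f2 : κ * r ^ d * T ≤ Y' := by
    have g : (c0 - 1/2) * (cG⁻¹ * ((1/2) ^ d * r ^ d)) * T ≤ (c0 - 1/2) * m' * T :=
      mul_le_mul_of_nonneg_right (mul_le_mul_of_nonneg_left e4 (by linarith)) hT.le
    have g2 := (g.trans f1)
    have : κ * r ^ d * T = cM⁻¹ * ((c0 - 1/2) * (cG⁻¹ * ((1/2) ^ d * r ^ d)) * T) := by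
      rw [hκ]; ring
    rw [this, inv_mul_le_iff₀ hcM0]
    exact g2
  have f3 : κ / (2 * C1) * (C1 * r ^ d * T) = κ * r ^ d * T / 2 := by field_simp
  rw [f3] at e2
  have f4 : κ * r ^ d * T / 2 ≤ 2 * C1 / κ * I' := by linarith
  calc κ ^ 2 / (4 * C1) * T * r ^ d = κ / (2 * C1) * (κ * r ^ d * T / 2) := by
        field_simp; ring
    _ ≤ κ / (2 * C1) * (2 * C1 / κ * I') := by gcongr
    _ = I' := by field_simp
end

section
/- Suppose that for some R_0 ≥ 1 and c_2 > 0 one has Σ_{x,y∈V_1 : ρ(0,x) ≤ R, y ≠ x, ρ(x,y) ≤ r} W(x,y) ≤ c_2·r^d·R^d for every real R > R_0 and every real 1 ≤ r ≤ R. Then there exists a constant C, depending only on c_2, d and α, such that for every N > 0, every η with 0 < 2η < N, and every integer n ≥ 1 with n·N > R_0 and n·η ≥ 1: Σ_{x,y∈V_1 : ρ(0,x) ≤ nN, y ≠ x, ρ(x,y) ≤ nη} W(x,y)·ρ(x,y)^{−(d+α−2)} ≤ C·n^{d+2−α}·N^d·η^{2−α}. -/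
open scoped ENNReal
open Classical

lemma aux_pow (b r t : ℝ) (ht : 0 < t) (h1 : t ≤ r) (h2 : r < 2 * t) :
    (t ^ b)⁻¹ ≤ 2 ^ |b| * r ^ (-b) := by
  have hr : 0 < r := ht.trans_le h1
  rw [← Real.rpow_neg ht.le]
  rcases le_total 0 b with hb | hb
  · rw [abs_of_nonneg hb]
    have h3 : t ^ (-b) ≤ (r / 2) ^ (-b) :=
      Real.rpow_le_rpow_of_nonpos (by positivity) (by linarith) (by linarith)
    refine h3.trans (le_of_eq ?_)
    rw [Real.div_rpow hr.le (by norm_num), Real.rpow_neg (by norm_num : (0:ℝ) ≤ 2)]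
    field_simp
  · have h3 : t ^ (-b) ≤ r ^ (-b) := Real.rpow_le_rpow ht.le h1 (by linarith)
    have h4 : (1:ℝ) ≤ 2 ^ |b| := Real.one_le_rpow (by norm_num) (abs_nonneg b)
    have h5 : 0 ≤ r ^ (-b) := by positivity
    nlinarith

/-- Estimate from the proof of Lemma 5.5: if
`∑_{ρ(0,x) ≤ R, 0 < ρ(x,y) ≤ r} W(x,y) ≤ c₂ r^d R^d` for all `R > R₀` and
`1 ≤ r ≤ R`, then there is `C` depending only on `c₂, d, α` such that for all
`N > 2η > 0` and integers `n ≥ 1` with `nN > R₀` and `nη ≥ 1`,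
`∑_{ρ(0,x) ≤ nN, 0 < ρ(x,y) ≤ nη} W(x,y) ρ(x,y)^{−(d+α−2)}
  ≤ C n^{d+2−α} N^d η^{2−α}`. -/
theorem stmt_17
    (c2 d α : ℝ) (hc2 : 0 < c2) (hd : 0 < d) (hα0 : 0 < α) (hα2 : α < 2) :
    ∃ C : ℝ, 0 < C ∧
      ∀ (V1 : Type) [Countable V1] (ρ : V1 → V1 → ℝ)
        (_hρ_self : ∀ x : V1, ρ x x = 0)
        (_hρ_symm : ∀ x y : V1, ρ x y = ρ y x)
        (_hρ_tri : ∀ x y z : V1, ρ x z ≤ ρ x y + ρ y z)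
        (_hρ_sep : ∀ x y : V1, x ≠ y → 1 ≤ ρ x y)
        (z0 : V1)
        (W : V1 → V1 → ℝ)
        (_hW_nonneg : ∀ x y, 0 ≤ W x y)
        (_hW_symm : ∀ x y, W x y = W y x)
        (R0 : ℝ) (_hR0 : 1 ≤ R0)
        (_hbound : ∀ R r : ℝ, R0 < R → 1 ≤ r → r ≤ R →
          (∑' p : V1 × V1,
              if ρ z0 p.1 ≤ R ∧ p.2 ≠ p.1 ∧ ρ p.1 p.2 ≤ r then
                ENNReal.ofReal (W p.1 p.2) else 0)
            ≤ ENNReal.ofReal (c2 * r ^ d * R ^ d)),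
        ∀ (N η : ℝ) (n : ℕ), 0 < η → 2 * η < N → 1 ≤ n →
          R0 < (n : ℝ) * N → 1 ≤ (n : ℝ) * η →
          (∑' p : V1 × V1,
              if ρ z0 p.1 ≤ (n : ℝ) * N ∧ p.2 ≠ p.1 ∧ ρ p.1 p.2 ≤ (n : ℝ) * η then
                ENNReal.ofReal (W p.1 p.2 / ρ p.1 p.2 ^ (d + α - 2)) else 0)
            ≤ ENNReal.ofReal (C * (n : ℝ) ^ (d + 2 - α) * N ^ d * η ^ (2 - α)) := by
  set b : ℝ := d + α - 2 with hb
  set q : ℝ := (2 ^ (2 - α))⁻¹ with hq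
  have hq0 : 0 < q := by positivity
  have hq1 : q < 1 := inv_lt_one_of_one_lt₀ (Real.one_lt_rpow (by norm_num) (by linarith))
  have hq2 : 0 < 1 - q := by linarith
  refine ⟨2 ^ |b| * c2 * (1 - q)⁻¹, by positivity, ?_⟩
  intro V1 _ ρ _ _ _ hsep z0 W hW _ R0 hR0 hbound N η n hη hN hn hR hs
  have hn0 : (0:ℝ) < n := by exact_mod_cast hn
  have hN0 : 0 < N := by linarith
  set s : ℝ := n * η with hsdef
  set R : ℝ := n * N with hRdef
  have hs0 : 0 < s := by linarith
  have hRp : 0 < R := by positivity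
  have hsR : s ≤ R := by
    rw [hsdef, hRdef]; exact mul_le_mul_of_nonneg_left (by linarith) hn0.le
  let r : ℕ → ℝ := fun k => s / 2 ^ k
  have hr0 : ∀ k, 0 < r k := fun k => by positivity
  have hrs : ∀ k, r k ≤ s := fun k => div_le_self hs0.le (one_le_pow₀ (by norm_num))
  let G : ℕ → V1 × V1 → ℝ≥0∞ := fun k p =>
    if ρ z0 p.1 ≤ R ∧ p.2 ≠ p.1 ∧ ρ p.1 p.2 ≤ r k then ENNReal.ofReal (W p.1 p.2) else 0
  let A : ℕ → ℝ≥0∞ := fun k =>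
    if 1 ≤ r k then ENNReal.ofReal (2 ^ |b| * r k ^ (-b)) else 0
  have hrpow : ∀ k, r k ^ (2 - α) = s ^ (2 - α) * q ^ k := by
    intro k
    simp only [r]
    have e : ((2:ℝ) ^ k) ^ (2 - α) = (2 ^ (2 - α)) ^ k := by
      rw [← Real.rpow_natCast, ← Real.rpow_natCast, ← Real.rpow_mul (by norm_num),
        ← Real.rpow_mul (by norm_num), mul_comm]
    rw [Real.div_rpow hs0.le (by positivity), hq, inv_pow, e, div_eq_mul_inv]
  calc _ ≤ ∑' p : V1 × V1, ∑' k, A k * G k p := by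
        refine ENNReal.tsum_le_tsum fun p => ?_
        split_ifs with h
        · obtain ⟨ha, hne, hc⟩ := h
          have h1 : 1 ≤ ρ p.1 p.2 := hsep _ _ hne.symm
          have h0 : 0 < ρ p.1 p.2 := by linarith
          obtain ⟨k, hk1, hk2⟩ := exists_nat_pow_near ((one_le_div h0).2 hc)
            (by norm_num : (1:ℝ) < 2)
          have h2k : (0:ℝ) < 2 ^ k := by positivity
          have e1 : ρ p.1 p.2 ≤ r k := by
            rw [le_div_iff₀ h0] at hk1
            simp only [r]
            rw [le_div_iff₀ h2k]; linarith
          have e2 : r k < 2 * ρ p.1 p.2 := by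
            rw [div_lt_iff₀ h0, pow_succ] at hk2
            simp only [r]
            rw [div_lt_iff₀ h2k]; linarith
          refine le_trans ?_ (ENNReal.le_tsum k)
          simp only [A, G]
          rw [if_pos (h1.trans e1), if_pos ⟨ha, hne, e1⟩,
            ← ENNReal.ofReal_mul (by have := hr0 k; positivity)]
          refine ENNReal.ofReal_le_ofReal ?_
          rw [div_eq_mul_inv, mul_comm]
          exact mul_le_mul_of_nonneg_right (aux_pow b _ _ h0 e1 e2) (hW _ _)
        · exact zero_le
    _ = ∑' k, A k * ∑' p : V1 × V1, G k p := by
        rw [ENNReal.tsum_comm]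
        simp_rw [ENNReal.tsum_mul_left]
    _ ≤ ∑' k, ENNReal.ofReal (2 ^ |b| * c2 * R ^ d * s ^ (2 - α) * q ^ k) := by
        refine ENNReal.tsum_le_tsum fun k => ?_
        simp only [A]
        split_ifs with h
        · refine (mul_le_mul_right (hbound R (r k) hR h ((hrs k).trans hsR)) _).trans ?_
          rw [← ENNReal.ofReal_mul (by have := hr0 k; positivity)]
          refine ENNReal.ofReal_le_ofReal (le_of_eq ?_)
          have e : r k ^ (-b) * r k ^ d = s ^ (2 - α) * q ^ k := by
            rw [← hrpow, ← Real.rpow_add (hr0 k)]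
            congr 1; rw [hb]; ring
          linear_combination (2 ^ |b| * c2 * R ^ d) * e
        · simp
    _ = ENNReal.ofReal (2 ^ |b| * c2 * R ^ d * s ^ (2 - α) * (1 - q)⁻¹) := by
        rw [← ENNReal.ofReal_tsum_of_nonneg (fun k => by positivity)
          ((summable_geometric_of_lt_one hq0.le hq1).mul_left _), tsum_mul_left,
          tsum_geometric_of_lt_one hq0.le hq1]
    _ ≤ _ := by
        refine ENNReal.ofReal_le_ofReal (le_of_eq ?_)
        rw [hRdef, hsdef, Real.mul_rpow hn0.le hN0.le, Real.mul_rpow hn0.le hη.le,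
          show d + 2 - α = d + (2 - α) by ring, Real.rpow_add hn0]
        ring
end
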